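/- arXiv:0905.1980 — 2 statements merged into one kernel-verified Lean document; each statement's English description precedes it below -/
import Mathlib

section
/- Let a = {aⱼ} be a summable, non-increasing sequence of positive real numbers with associated Cantor set C_a, and let h be a dimension function. If P₀^h(C_a) = ∞ then P^h(C_a) = ∞, and if P₀^h(C_a) > 0 then P^h(C_a) > 0. -/
open Set Filter Metric MeasureTheory
open scoped ENNReal NNReal Topology

noncomputable section

/-- The `h`-Hausdorff measure of `E ⊆ ℝ`:
`H^h(E) = lim_{δ→0⁺} inf {Σᵢ h(|Eᵢ|) : E ⊆ ⋃ᵢ Eᵢ, |Eᵢ| ≤ δ}`.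
Since the inner infimum is antitone in `δ`, the limit as `δ → 0⁺` is the
supremum over `0 < δ ≤ A` (the parameter `A` records the domain `(0,A]` of the
dimension function `h`; by monotonicity the value of the limit is unchanged). -/
def Hh (A : ℝ) (h : ℝ → ℝ≥0∞) (E : Set ℝ) : ℝ≥0∞ :=
  ⨆ (δ : ℝ) (_ : 0 < δ) (_ : δ ≤ A),
    ⨅ (t : ℕ → Set ℝ) (_ : E ⊆ ⋃ n, t n) (_ : ∀ n, Metric.diam (t n) ≤ δ),
      ∑' n, h (Metric.diam (t n))

/-- A `δ`-packing of `E`: a countable disjoint family of open balls centered at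
points of `E` with diameters less than `δ`, recorded as a set of
(center, radius) pairs. -/
def IsPacking (E : Set ℝ) (δ : ℝ) (P : Set (ℝ × ℝ)) : Prop :=
  P.Countable ∧ (∀ p ∈ P, p.1 ∈ E ∧ 0 < p.2 ∧ 2 * p.2 < δ) ∧
    P.PairwiseDisjoint fun p => Metric.ball p.1 p.2

/-- The `h`-packing pre-measure of `E ⊆ ℝ`:
`P₀^h(E) = lim_{δ→0⁺} sup {Σᵢ h(|Bᵢ|) : {Bᵢ} is a δ-packing of E}`.
The inner supremum is monotone in `δ`, so the limit as `δ → 0⁺` is the infimum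
over `0 < δ ≤ A`. -/
def P0h (A : ℝ) (h : ℝ → ℝ≥0∞) (E : Set ℝ) : ℝ≥0∞ :=
  ⨅ (δ : ℝ) (_ : 0 < δ) (_ : δ ≤ A),
    ⨆ (P : Set (ℝ × ℝ)) (_ : IsPacking E δ P), ∑' p : P, h (2 * (p : ℝ × ℝ).2)

/-- The `h`-packing measure: `P^h(E) = inf {Σᵢ P₀^h(Eᵢ) : E = ⋃ᵢ Eᵢ}`. -/
def Ph (A : ℝ) (h : ℝ → ℝ≥0∞) (E : Set ℝ) : ℝ≥0∞ :=
  ⨅ (t : ℕ → Set ℝ) (_ : E = ⋃ n, t n), ∑' n, P0h A h (t n)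

/-- `h` is a dimension function with domain `(0, A]`: continuous, increasing,
doubling, positive, with `h(x) → 0` as `x → 0⁺`.  We record partial functions
`(0,A] → (0,∞]` as functions `ℝ → ℝ≥0∞` extended by `0` on nonpositive
arguments (the continuous extension at `0`). -/
structure IsDimFun (A : ℝ) (h : ℝ → ℝ≥0∞) : Prop where
  posA : 0 < A
  zero_of_nonpos : ∀ x : ℝ, x ≤ 0 → h x = 0
  pos : ∀ x ∈ Set.Ioc (0 : ℝ) A, 0 < h x
  continuousOn : ContinuousOn h (Set.Ioc 0 A)
  strictMonoOn : StrictMonoOn h (Set.Ioc 0 A)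
  doubling : ∃ τ : ℝ≥0∞, 0 < τ ∧ τ ≠ ∞ ∧ ∀ x : ℝ, 0 < x → 2 * x ≤ A → τ * h (2 * x) ≤ h x
  tendsto_zero : Tendsto h (nhdsWithin 0 (Set.Ioi 0)) (nhds 0)

/-- `f ≼ h` on `(0, A]`: there is a (finite, positive) constant `c` with
`f(x) ≤ c·h(x)` for all `x ∈ (0,A]`. -/
def FLeq (A : ℝ) (f h : ℝ → ℝ≥0∞) : Prop :=
  ∃ c : ℝ≥0∞, 0 < c ∧ c ≠ ∞ ∧ ∀ x ∈ Set.Ioc (0 : ℝ) A, f x ≤ c * h x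

/-- `f ≡ h` on `(0, A]`: `f ≼ h` and `h ≼ f`. -/
def FEquiv (A : ℝ) (f h : ℝ → ℝ≥0∞) : Prop := FLeq A f h ∧ FLeq A h f

/-- Tail of a series: `rTail a n = Σ_{j ≥ n} a j` (0-based indexing, so the
paper's `r_n`, `n ≥ 1`, is `rTail a (n-1)`). -/
def rTail (a : ℕ → ℝ) (n : ℕ) : ℝ := ∑' k : ℕ, a (n + k)

/-- In the Cantor construction for the gap sequence `a`, the gaps are indexed
by the nodes `m ≥ 1` of the infinite binary tree in heap order (node `m` has
children `2m, 2m+1`), the gap at node `m` having length `a (m-1)`.  `nodeLen a m`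
is the sum of the lengths of all gaps in the subtree rooted at `m`, i.e. the
length of the step interval corresponding to node `m`. -/
def nodeLen (a : ℕ → ℝ) (m : ℕ) : ℝ :=
  ∑' k : ℕ, ∑ i ∈ Finset.range (2 ^ k), a (m * 2 ^ k + i - 1)

/-- Left endpoint of the `j`-th (0 ≤ j < 2^k, left to right) step-`k` interval
in the Cantor construction for the gap sequence `a` (realized in `[0, Σ a]`):
a left child keeps its parent's left endpoint; a right child's interval starts
after its left sibling's interval followed by the parent's gap. -/
def leftEnd (a : ℕ → ℝ) : ℕ → ℕ → ℝ
  | 0, _ => 0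
  | (k + 1), j =>
    if j % 2 = 0 then leftEnd a k (j / 2)
    else leftEnd a k (j / 2) + nodeLen a (2 ^ (k + 1) + j - 1) + a (2 ^ k + j / 2 - 1)

/-- The Cantor set `C_a` associated with a (positive, non-increasing, summable)
sequence `a`, realized inside the interval `[0, Σ a]`: the intersection over
`k` of the unions of the `2^k` step-`k` intervals. -/
def cantorSetOf (a : ℕ → ℝ) : Set ℝ :=
  ⋂ k : ℕ, ⋃ j ∈ Finset.range (2 ^ k),
    Set.Icc (leftEnd a k j) (leftEnd a k j + nodeLen a (2 ^ k + j))

/-- `h` (increasing and continuous on `(0, A]`) is associated to the sequence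
`a`: the sequence `{h(r_n/n)}` is equivalent to `{1/n}`, i.e. there are
constants `0 < c₁, c₂ < ∞` with `c₁ ≤ n · h(r_n/n) ≤ c₂` for all `n ≥ 1`
(0-based: `n ≥ 1` corresponds to `n+1` below). -/
def IsAssociated (A : ℝ) (h : ℝ → ℝ≥0∞) (a : ℕ → ℝ) : Prop :=
  ContinuousOn h (Set.Ioc 0 A) ∧ StrictMonoOn h (Set.Ioc 0 A) ∧
  ∃ c₁ c₂ : ℝ≥0∞, 0 < c₁ ∧ c₂ ≠ ∞ ∧ ∀ n : ℕ,
    c₁ ≤ ((n : ℝ≥0∞) + 1) * h (rTail a n / ((n : ℝ) + 1)) ∧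
    ((n : ℝ≥0∞) + 1) * h (rTail a n / ((n : ℝ) + 1)) ≤ c₂

/-- Weak tail-equivalence: there are positive integers `j, k` with
`r_n^{(a)} ≥ r_{jn}^{(b)}/j` and `r_n^{(b)} ≥ r_{kn}^{(a)}/k` for all `n ≥ 1`
(0-based shift: paper's `r_n` is `rTail · (n-1)`). -/
def WeakTailEquiv (a b : ℕ → ℝ) : Prop :=
  ∃ j k : ℕ, 0 < j ∧ 0 < k ∧
    (∀ n : ℕ, rTail b (j * (n + 1) - 1) / (j : ℝ) ≤ rTail a n) ∧
    (∀ n : ℕ, rTail a (k * (n + 1) - 1) / (k : ℝ) ≤ rTail b n)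

/-- Tail-equivalence: the sequences of tails are equivalent, i.e. the ratios
`r_n^{(a)}/r_n^{(b)}` are bounded above and below by positive constants. -/
def TailEquiv (a b : ℕ → ℝ) : Prop :=
  ∃ c₁ c₂ : ℝ, 0 < c₁ ∧ ∀ n : ℕ,
    c₁ ≤ rTail a n / rTail b n ∧ rTail a n / rTail b n ≤ c₂

/-- The Hausdorff dimension of `E`, computed from the `h_s`-Hausdorff measures,
`h_s(x) = x^s`:  `dim_H E = sup {s > 0 : H^{h_s}(E) = ∞}`. -/
def hausdDim (A : ℝ) (E : Set ℝ) : ℝ≥0∞ :=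
  ⨆ (s : ℝ) (_ : 0 < s) (_ : Hh A (fun x => ENNReal.ofReal (x ^ s)) E = ∞),
    ENNReal.ofReal s

/-- The packing dimension of `E`: `dim_P E = sup {s > 0 : P^{h_s}(E) = ∞}`. -/
def packDim (A : ℝ) (E : Set ℝ) : ℝ≥0∞ :=
  ⨆ (s : ℝ) (_ : 0 < s) (_ : Ph A (fun x => ENNReal.ofReal (x ^ s)) E = ∞),
    ENNReal.ofReal s

/-- The pre-packing dimension of `E`: `dim_{P₀} E = sup {s > 0 : P₀^{h_s}(E) = ∞}`. -/
def prePackDim (A : ℝ) (E : Set ℝ) : ℝ≥0∞ :=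
  ⨆ (s : ℝ) (_ : 0 < s) (_ : P0h A (fun x => ENNReal.ofReal (x ^ s)) E = ∞),
    ENNReal.ofReal s

/-- `f ≼ h` on the set `S`, for real-valued functions. -/
def RLeqOn (S : Set ℝ) (f h : ℝ → ℝ) : Prop :=
  ∃ c : ℝ, 0 < c ∧ ∀ x ∈ S, f x ≤ c * h x

/-- `f ≡ h` on the set `S`, for real-valued functions. -/
def REquivOn (S : Set ℝ) (f h : ℝ → ℝ) : Prop := RLeqOn S f h ∧ RLeqOn S h f

/-- Real-valued version of `IsAssociated`: `h : (0,A] → (0,∞)` is increasing,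
continuous, positive and `{h(r_n/n)} ≡ {1/n}`. -/
def IsAssociatedR (A : ℝ) (h : ℝ → ℝ) (a : ℕ → ℝ) : Prop :=
  ContinuousOn h (Set.Ioc 0 A) ∧ StrictMonoOn h (Set.Ioc 0 A) ∧
  (∀ x ∈ Set.Ioc (0 : ℝ) A, 0 < h x) ∧
  ∃ c₁ c₂ : ℝ, 0 < c₁ ∧ ∀ n : ℕ,
    c₁ ≤ ((n : ℝ) + 1) * h (rTail a n / ((n : ℝ) + 1)) ∧
    ((n : ℝ) + 1) * h (rTail a n / ((n : ℝ) + 1)) ≤ c₂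

end

/-- supremum over `δ`-packings -/
noncomputable def packSup (h : ℝ → ℝ≥0∞) (δ : ℝ) (E : Set ℝ) : ℝ≥0∞ :=
  ⨆ (P : Set (ℝ × ℝ)) (_ : IsPacking E δ P), ∑' p : P, h (2 * (p : ℝ × ℝ).2)

/-- finite separated systems -/
def FinPack (E : Set ℝ) (δ : ℝ) (T : Finset (ℝ × ℝ)) : Prop :=
  (∀ p ∈ T, p.1 ∈ E ∧ 0 < p.2 ∧ 2 * p.2 < δ) ∧
    ∀ p ∈ T, ∀ q ∈ T, p ≠ q → p.2 + q.2 ≤ dist p.1 q.1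

theorem packSup_le {h : ℝ → ℝ≥0∞} {δ : ℝ} {E : Set ℝ} {c : ℝ≥0∞}
    (H : ∀ T : Finset (ℝ × ℝ), FinPack E δ T → ∑ p ∈ T, h (2 * p.2) ≤ c) :
    packSup h δ E ≤ c := by
  classical
  refine iSup₂_le fun P hP => ?_
  rw [ENNReal.tsum_eq_iSup_sum]
  refine iSup_le fun s => ?_
  have := H (s.map (Function.Embedding.subtype _)) ?_
  · rw [Finset.sum_map] at this
    exact this
  · have hmem : ∀ p ∈ s.map (Function.Embedding.subtype (· ∈ P)), p ∈ P := by
      intro p hp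
      rw [Finset.mem_map] at hp
      obtain ⟨x, _, rfl⟩ := hp
      exact x.2
    refine ⟨fun p hp => hP.2.1 p (hmem p hp), fun p hp q hq hpq => ?_⟩
    have h1 := hP.2.1 p (hmem p hp)
    have h2 := hP.2.1 q (hmem q hq)
    exact (disjoint_ball_ball_iff h1.2.1 h2.2.1).1 (hP.2.2 (hmem p hp) (hmem q hq) hpq)

theorem FinPack.sum_le {h : ℝ → ℝ≥0∞} {δ : ℝ} {E : Set ℝ} {T : Finset (ℝ × ℝ)}
    (H : FinPack E δ T) : ∑ p ∈ T, h (2 * p.2) ≤ packSup h δ E := by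
  have hP : IsPacking E δ (T : Set (ℝ × ℝ)) := by
    refine ⟨T.countable_toSet, fun p hp => H.1 p hp, fun p hp q hq hpq => ?_⟩
    exact (disjoint_ball_ball_iff (H.1 p hp).2.1 (H.1 q hq).2.1).2 (H.2 p hp q hq hpq)
  refine le_trans ?_ (le_iSup₂ (f := fun (P : Set (ℝ × ℝ)) (_ : IsPacking E δ P) =>
    ∑' p : P, h (2 * (p : ℝ × ℝ).2)) _ hP)
  rw [← Finset.tsum_subtype]
  rfl

/-- indexed version -/
theorem sum_le_packSup {ι : Type*} {h : ℝ → ℝ≥0∞} {δ : ℝ} {E : Set ℝ} (T : Finset ι)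
    (x r : ι → ℝ) (h1 : ∀ i ∈ T, x i ∈ E ∧ 0 < r i ∧ 2 * r i < δ)
    (h2 : ∀ i ∈ T, ∀ j ∈ T, i ≠ j → r i + r j ≤ dist (x i) (x j)) :
    ∑ i ∈ T, h (2 * r i) ≤ packSup h δ E := by
  classical
  have hinj : Set.InjOn (fun i => (x i, r i)) (T : Set ι) := by
    intro i hi j hj hij
    by_contra hne
    have h3 := h2 i hi j hj hne
    simp only [Prod.mk.injEq] at hij
    rw [hij.1, dist_self] at h3
    linarith [(h1 i hi).2.1, (h1 j hj).2.1]
  have hF : FinPack E δ (T.image fun i => (x i, r i)) := by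
    refine ⟨?_, ?_⟩
    · intro p hp
      obtain ⟨i, hi, rfl⟩ := Finset.mem_image.1 hp
      exact h1 i hi
    · intro p hp q hq hpq
      obtain ⟨i, hi, rfl⟩ := Finset.mem_image.1 hp
      obtain ⟨j, hj, rfl⟩ := Finset.mem_image.1 hq
      exact h2 i hi j hj (fun e => hpq (by rw [e]))
  have := hF.sum_le (h := h)
  rwa [Finset.sum_image hinj] at this

theorem packSup_mono {h : ℝ → ℝ≥0∞} {δ δ' : ℝ} {E E' : Set ℝ} (hδ : δ ≤ δ') (hE : E ⊆ E') :
    packSup h δ E ≤ packSup h δ' E' :=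
  packSup_le fun _ hT => FinPack.sum_le
    ⟨fun p hp => ⟨hE (hT.1 p hp).1, (hT.1 p hp).2.1, (hT.1 p hp).2.2.trans_le hδ⟩, hT.2⟩

theorem P0h_eq (A : ℝ) (h : ℝ → ℝ≥0∞) (E : Set ℝ) :
    P0h A h E = ⨅ δ : {δ : ℝ // 0 < δ ∧ δ ≤ A}, packSup h δ E := by
  rw [iInf_subtype]
  unfold P0h packSup
  simp only [iInf_and]

theorem P0h_le (A : ℝ) (h : ℝ → ℝ≥0∞) (E : Set ℝ) {δ : ℝ} (h0 : 0 < δ) (h1 : δ ≤ A) :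
    P0h A h E ≤ packSup h δ E := by
  rw [P0h_eq]
  exact iInf_le (fun δ : {δ : ℝ // 0 < δ ∧ δ ≤ A} => packSup h δ E) ⟨δ, h0, h1⟩

theorem P0h_mono {A : ℝ} {h : ℝ → ℝ≥0∞} {E E' : Set ℝ} (hE : E ⊆ E') :
    P0h A h E ≤ P0h A h E' := by
  rw [P0h_eq, P0h_eq]
  exact iInf_mono fun δ => packSup_mono le_rfl hE

theorem packSup_union (h : ℝ → ℝ≥0∞) (δ : ℝ) (E F : Set ℝ) :
    packSup h δ (E ∪ F) ≤ packSup h δ E + packSup h δ F := by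
  classical
  refine packSup_le fun T hT => ?_
  rw [← Finset.sum_filter_add_sum_filter_not T (fun p => p.1 ∈ E)]
  refine add_le_add (FinPack.sum_le ⟨?_, ?_⟩) (FinPack.sum_le ⟨?_, ?_⟩)
  · intro p hp
    rw [Finset.mem_filter] at hp
    exact ⟨hp.2, (hT.1 p hp.1).2⟩
  · intro p hp q hq
    rw [Finset.mem_filter] at hp hq
    exact hT.2 p hp.1 q hq.1
  · intro p hp
    rw [Finset.mem_filter] at hp
    exact ⟨((hT.1 p hp.1).1).resolve_left hp.2, (hT.1 p hp.1).2⟩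
  · intro p hp q hq
    rw [Finset.mem_filter] at hp hq
    exact hT.2 p hp.1 q hq.1

theorem P0h_union (A : ℝ) (h : ℝ → ℝ≥0∞) (E F : Set ℝ) :
    P0h A h (E ∪ F) ≤ P0h A h E + P0h A h F := by
  rw [P0h_eq, P0h_eq, P0h_eq, ENNReal.iInf_add_iInf]
  · exact iInf_mono fun δ => packSup_union h δ E F
  · rintro ⟨d, hd0, hdA⟩ ⟨d', hd0', hdA'⟩
    exact ⟨⟨min d d', lt_min hd0 hd0', (min_le_left _ _).trans hdA⟩,
      add_le_add (packSup_mono (min_le_left _ _) le_rfl) (packSup_mono (min_le_right _ _) le_rfl)⟩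

theorem P0h_empty (A : ℝ) (h : ℝ → ℝ≥0∞) (hA : 0 < A) : P0h A h ∅ = 0 := by
  refine le_antisymm ((P0h_le A h ∅ hA le_rfl).trans (packSup_le fun T hT => ?_)) bot_le
  have : T = ∅ := Finset.eq_empty_of_forall_notMem fun p hp => (hT.1 p hp).1
  simp [this]

theorem P0h_biUnion (A : ℝ) (h : ℝ → ℝ≥0∞) (hA : 0 < A) {ι : Type*} (t : Finset ι)
    (E : ι → Set ℝ) : P0h A h (⋃ i ∈ t, E i) ≤ ∑ i ∈ t, P0h A h (E i) := by
  classical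
  induction t using Finset.induction_on with
  | empty => simp [P0h_empty A h hA]
  | insert i t hi ih =>
    rw [Finset.set_biUnion_insert, Finset.sum_insert hi]
    exact (P0h_union A h _ _).trans (add_le_add le_rfl ih)

/-- points of a packing close to `E` are moved to `E` -/
theorem near_sum_le {A : ℝ} {h : ℝ → ℝ≥0∞} {τ : ℝ≥0∞} (hτ0 : 0 < τ) (hτ : τ ≠ ∞)
    (hdb : ∀ x : ℝ, 0 < x → 2 * x ≤ A → τ * h (2 * x) ≤ h x) {δ : ℝ} (hδ : δ ≤ A)
    {K E : Set ℝ} {T : Finset (ℝ × ℝ)} (hT : FinPack K δ T)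
    (hn : ∀ p ∈ T, ∃ y ∈ E, dist p.1 y < p.2 / 2) :
    ∑ p ∈ T, h (2 * p.2) ≤ τ⁻¹ * packSup h δ E := by
  choose! y hyE hy using hn
  have h1 : ∑ p ∈ T, h (2 * (p.2 / 2)) ≤ packSup h δ E := by
    refine sum_le_packSup T y (fun p => p.2 / 2) ?_ ?_
    · intro p hp
      have := hT.1 p hp
      exact ⟨hyE p hp, by linarith, by linarith⟩
    · intro p hp q hq hpq
      have h1 := hT.2 p hp q hq hpq
      have h2 := dist_triangle4 p.1 (y p) (y q) q.1
      have h3 := hy p hp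
      have h4 := hy q hq
      rw [dist_comm] at h4
      linarith
  calc ∑ p ∈ T, h (2 * p.2) ≤ ∑ p ∈ T, τ⁻¹ * h (2 * (p.2 / 2)) := by
        refine Finset.sum_le_sum fun p hp => ?_
        have h2 := hT.1 p hp
        rw [← ENNReal.mul_le_iff_le_inv hτ0.ne' hτ]
        have := hdb p.2 h2.2.1 (by linarith)
        rwa [show 2 * (p.2 / 2) = p.2 by ring]
    _ = τ⁻¹ * ∑ p ∈ T, h (2 * (p.2 / 2)) := by rw [Finset.mul_sum]
    _ ≤ _ := by gcongr

theorem packSup_closure_le {A : ℝ} {h : ℝ → ℝ≥0∞} {τ : ℝ≥0∞} (hτ0 : 0 < τ) (hτ : τ ≠ ∞)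
    (hdb : ∀ x : ℝ, 0 < x → 2 * x ≤ A → τ * h (2 * x) ≤ h x) {δ : ℝ} (hδ : δ ≤ A) (E : Set ℝ) :
    packSup h δ (closure E) ≤ τ⁻¹ * packSup h δ E := by
  refine packSup_le fun T hT => near_sum_le hτ0 hτ hdb hδ hT fun p hp => ?_
  have := hT.1 p hp
  exact Metric.mem_closure_iff.1 this.1 _ (by linarith)

theorem exists_thickening {A : ℝ} (hA : 0 < A) {h : ℝ → ℝ≥0∞} {τ : ℝ≥0∞} (hτ0 : 0 < τ) (hτ : τ ≠ ∞)
    (hdb : ∀ x : ℝ, 0 < x → 2 * x ≤ A → τ * h (2 * x) ≤ h x)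
    {K E : Set ℝ} (hK : P0h A h K ≠ ∞) {ε : ℝ≥0∞} (hε : 0 < ε) :
    ∃ η : ℝ, 0 < η ∧ P0h A h (K ∩ Metric.thickening η E) ≤ τ⁻¹ * P0h A h E + ε := by
  classical
  by_contra hcon
  push Not at hcon
  have hτi : τ⁻¹ ≠ 0 := ENNReal.inv_ne_zero.2 hτ
  have hτi' : τ⁻¹ ≠ ∞ := ENNReal.inv_ne_top.2 hτ0.ne'
  have hE : P0h A h E ≠ ∞ := by
    intro hE
    have := hcon 1 one_pos
    rw [hE, ENNReal.mul_top hτi, top_add] at this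
    exact not_top_lt this
  have hεtop : ε ≠ ∞ := by
    intro hE
    have := hcon 1 one_pos
    rw [hE, add_top] at this
    exact not_top_lt this
  have hε2 : 0 < ε / 2 := ENNReal.half_pos hε.ne'
  have hc : τ * (ε / 2) ≠ 0 := mul_ne_zero hτ0.ne' hε2.ne'
  obtain ⟨δ0, hδ0, hδA, hS⟩ : ∃ δ0 : ℝ, 0 < δ0 ∧ δ0 ≤ A ∧
      packSup h δ0 E < P0h A h E + τ * (ε / 2) := by
    have h1 : P0h A h E < P0h A h E + τ * (ε / 2) := ENNReal.lt_add_right hE hc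
    conv_lhs at h1 => rw [P0h_eq]
    obtain ⟨⟨d, h2, h3⟩, h4⟩ := iInf_lt_iff.1 h1
    exact ⟨d, h2, h3, h4⟩
  have key : ∀ δ : ℝ, 0 < δ → δ ≤ δ0 → ∀ η : ℝ, 0 < η → ∃ T : Finset (ℝ × ℝ),
      FinPack (K ∩ Metric.thickening η E) δ T ∧ (∀ p ∈ T, ∀ y ∈ E, 2 * p.2 ≤ dist p.1 y) ∧
      τ * (τ * (ε / 2)) ≤ ∑ p ∈ T, h (2 * p.2) := by
    intro δ hδ hδ' η hη
    have h1 := (hcon η hη).trans_le (P0h_le A h _ hδ (hδ'.trans hδA))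
    obtain ⟨T, hT, hTs⟩ : ∃ T : Finset (ℝ × ℝ), FinPack (K ∩ Metric.thickening η E) δ T ∧
        τ⁻¹ * P0h A h E + ε < ∑ p ∈ T, h (2 * p.2) := by
      by_contra hno
      push Not at hno
      exact absurd h1 (not_lt.2 (packSup_le hno))
    set T1 := T.filter fun p => ∃ y ∈ E, dist p.1 y < p.2 / 2 with hT1
    set T2 := T.filter fun p => ¬ ∃ y ∈ E, dist p.1 y < p.2 / 2 with hT2
    have hsum : ∑ p ∈ T1, h (2 * p.2) + ∑ p ∈ T2, h (2 * p.2) = ∑ p ∈ T, h (2 * p.2) :=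
      Finset.sum_filter_add_sum_filter_not T _ _
    have hs1 : ∑ p ∈ T1, h (2 * p.2) ≤ τ⁻¹ * P0h A h E + ε / 2 := by
      have := near_sum_le (K := K ∩ Metric.thickening η E) (E := E) (T := T1) hτ0 hτ hdb
        (hδ'.trans hδA) ⟨fun p hp => hT.1 p (Finset.mem_filter.1 hp).1,
          fun p hp q hq => hT.2 p (Finset.mem_filter.1 hp).1 q (Finset.mem_filter.1 hq).1⟩
          (fun p hp => (Finset.mem_filter.1 hp).2)
      refine this.trans ?_
      calc τ⁻¹ * packSup h δ E ≤ τ⁻¹ * (P0h A h E + τ * (ε / 2)) := by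
            gcongr
            exact (packSup_mono hδ' le_rfl).trans hS.le
        _ = τ⁻¹ * P0h A h E + ε / 2 := by
            rw [mul_add, ← mul_assoc, ENNReal.inv_mul_cancel hτ0.ne' hτ, one_mul]
    have hs2 : ε / 2 ≤ ∑ p ∈ T2, h (2 * p.2) := by
      by_contra hlt
      push Not at hlt
      have h3 : ∑ p ∈ T, h (2 * p.2) ≤ τ⁻¹ * P0h A h E + ε := by
        rw [← hsum]
        calc _ ≤ (τ⁻¹ * P0h A h E + ε / 2) + ε / 2 := add_le_add hs1 hlt.le
          _ = _ := by rw [add_assoc, ENNReal.add_halves]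
      exact absurd hTs (not_lt.2 h3)
    have hinj : Set.InjOn (fun p : ℝ × ℝ => (p.1, p.2 / 4)) (T2 : Set (ℝ × ℝ)) := by
      intro p _ q _ hpq
      simp only [Prod.mk.injEq] at hpq
      exact Prod.ext hpq.1 (by linarith [hpq.2])
    refine ⟨T2.image fun p => (p.1, p.2 / 4), ⟨?_, ?_⟩, ?_, ?_⟩
    · intro p hp
      obtain ⟨q, hq, rfl⟩ := Finset.mem_image.1 hp
      have := hT.1 q (Finset.mem_filter.1 hq).1
      exact ⟨this.1, by dsimp only; linarith, by dsimp only; linarith⟩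
    · intro p hp p' hp' hne
      obtain ⟨q, hq, rfl⟩ := Finset.mem_image.1 hp
      obtain ⟨q', hq', rfl⟩ := Finset.mem_image.1 hp'
      have h1 := hT.1 q (Finset.mem_filter.1 hq).1
      have h2 := hT.1 q' (Finset.mem_filter.1 hq').1
      have := hT.2 q (Finset.mem_filter.1 hq).1 q' (Finset.mem_filter.1 hq').1
        (fun e => hne (by rw [e]))
      dsimp only
      linarith
    · intro p hp y hy
      obtain ⟨q, hq, rfl⟩ := Finset.mem_image.1 hp
      have := (Finset.mem_filter.1 hq).2
      push Not at this
      have := this y hy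
      dsimp only
      linarith
    · rw [Finset.sum_image hinj]
      calc τ * (τ * (ε / 2)) ≤ τ * (τ * ∑ p ∈ T2, h (2 * p.2)) := by gcongr
        _ = ∑ p ∈ T2, τ * (τ * h (2 * p.2)) := by rw [Finset.mul_sum, Finset.mul_sum]
        _ ≤ _ := by
          refine Finset.sum_le_sum fun p hp => ?_
          have h1 := hT.1 p (Finset.mem_filter.1 hp).1
          have h2 := hdb p.2 h1.2.1 (by linarith)
          have h3 := hdb (p.2 / 2) (by linarith) (by linarith)
          rw [show 2 * (p.2 / 2) = p.2 by ring] at h3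
          rw [show 2 * (p.2 / 4) = p.2 / 2 by ring]
          exact le_trans (by gcongr) h3
  have ind : ∀ δ : ℝ, 0 < δ → δ ≤ δ0 → ∀ N : ℕ, ∃ T : Finset (ℝ × ℝ),
      FinPack K δ T ∧ (∀ p ∈ T, ∀ y ∈ E, 2 * p.2 ≤ dist p.1 y) ∧
      N * (τ * (τ * (ε / 2))) ≤ ∑ p ∈ T, h (2 * p.2) := by
    intro δ hδ hδ' N
    induction N with
    | zero => exact ⟨∅, ⟨by simp, by simp⟩, by simp, by simp⟩
    | succ N ih =>
      obtain ⟨T, hT, hTE, hTs⟩ := ih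
      obtain ⟨η, hη, hηT⟩ : ∃ η : ℝ, 0 < η ∧ ∀ p ∈ T, 2 * η ≤ p.2 := by
        rcases T.eq_empty_or_nonempty with rfl | hne
        · exact ⟨1, one_pos, by simp⟩
        · obtain ⟨p, hp, hmin⟩ := T.exists_min_image (fun p => p.2) hne
          exact ⟨p.2 / 2, by linarith [(hT.1 p hp).2.1], fun q hq => by linarith [hmin q hq]⟩
      obtain ⟨T', hT', hTE', hTs'⟩ := key δ hδ hδ' η hη
      have hcross : ∀ p ∈ T, ∀ q ∈ T', p.2 + q.2 ≤ dist p.1 q.1 := by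
        intro p hp q hq
        obtain ⟨z, hz, hqz⟩ := Metric.mem_thickening_iff.1 (hT'.1 q hq).1.2
        have h1 := hTE p hp z hz
        have h2 := hTE' q hq z hz
        have h3 := dist_triangle p.1 q.1 z
        have h4 := hηT p hp
        linarith
      have hdisj : Disjoint T T' := by
        rw [Finset.disjoint_left]
        intro p hp hp'
        have := hcross p hp p hp'
        rw [dist_self] at this
        linarith [(hT.1 p hp).2.1]
      refine ⟨T ∪ T', ⟨?_, ?_⟩, ?_, ?_⟩
      · intro p hp
        rcases Finset.mem_union.1 hp with hp | hp
        · exact hT.1 p hp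
        · exact ⟨(hT'.1 p hp).1.1, (hT'.1 p hp).2⟩
      · intro p hp q hq hpq
        rcases Finset.mem_union.1 hp with hp | hp <;> rcases Finset.mem_union.1 hq with hq | hq
        · exact hT.2 p hp q hq hpq
        · exact hcross p hp q hq
        · have := hcross q hq p hp
          rw [dist_comm, add_comm]
          exact this
        · exact hT'.2 p hp q hq hpq
      · intro p hp
        rcases Finset.mem_union.1 hp with hp | hp
        · exact hTE p hp
        · exact hTE' p hp
      · rw [Finset.sum_union hdisj]
        push_cast
        rw [add_mul, one_mul]
        exact add_le_add hTs hTs'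
  have hne : τ * (τ * (ε / 2)) ≠ 0 := mul_ne_zero hτ0.ne' hc
  have htop : ∀ δ : ℝ, 0 < δ → δ ≤ δ0 → packSup h δ K = ∞ := by
    intro δ hδ hδ'
    by_contra hfin
    obtain ⟨N, hN⟩ := ENNReal.exists_nat_mul_gt hne hfin
    obtain ⟨T, hT, _, hTs⟩ := ind δ hδ hδ' N
    exact absurd (hN.trans_le (hTs.trans hT.sum_le)) (lt_irrefl _)
  apply hK
  rw [P0h_eq, iInf_eq_top]
  rintro ⟨d, hd0, hdA⟩
  rw [← top_le_iff, ← htop (min d δ0) (lt_min hd0 hδ0) (min_le_right _ _)]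
  exact packSup_mono (min_le_left _ _) le_rfl

theorem P0h_le_Ph {A : ℝ} (hA : 0 < A) {h : ℝ → ℝ≥0∞} {τ : ℝ≥0∞} (hτ0 : 0 < τ) (hτ : τ ≠ ∞)
    (hdb : ∀ x : ℝ, 0 < x → 2 * x ≤ A → τ * h (2 * x) ≤ h x)
    {K : Set ℝ} (hKc : IsCompact K) (hK : P0h A h K ≠ ∞) :
    τ * P0h A h K ≤ Ph A h K := by
  refine le_iInf₂ fun t ht => ?_
  rw [ENNReal.mul_le_iff_le_inv hτ0.ne' hτ]
  refine ENNReal.le_of_forall_pos_le_add fun ε hε _ => ?_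
  obtain ⟨e, he, hes⟩ := ENNReal.exists_pos_sum_of_countable'
    (ENNReal.coe_pos.2 hε).ne' ℕ
  choose η hη hle using fun i => exists_thickening (E := t i) hA hτ0 hτ hdb hK (he i)
  obtain ⟨s, hs⟩ := hKc.elim_finite_subcover (fun i => Metric.thickening (η i) (t i))
    (fun i => Metric.isOpen_thickening) (by
      conv_lhs => rw [ht]
      exact iUnion_mono fun i => Metric.self_subset_thickening (hη i) _)
  calc P0h A h K ≤ P0h A h (⋃ i ∈ s, K ∩ Metric.thickening (η i) (t i)) := by
        apply P0h_mono
        intro x hx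
        have := hs hx
        simp only [mem_iUnion, exists_prop] at this ⊢
        obtain ⟨i, hi, hxi⟩ := this
        exact ⟨i, hi, hx, hxi⟩
    _ ≤ ∑ i ∈ s, P0h A h (K ∩ Metric.thickening (η i) (t i)) := P0h_biUnion A h hA s _
    _ ≤ ∑ i ∈ s, (τ⁻¹ * P0h A h (t i) + e i) := Finset.sum_le_sum fun i _ => hle i
    _ ≤ ∑' i, (τ⁻¹ * P0h A h (t i) + e i) := ENNReal.sum_le_tsum s
    _ = τ⁻¹ * ∑' i, P0h A h (t i) + ∑' i, e i := by rw [ENNReal.tsum_add, ENNReal.tsum_mul_left]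
    _ ≤ _ := by gcongr

section Tree

variable {a : ℕ → ℝ}

/-- one level of `nodeLen` -/
def nodeTerm (a : ℕ → ℝ) (m k : ℕ) : ℝ := ∑ i ∈ Finset.range (2 ^ k), a (m * 2 ^ k + i - 1)

theorem nodeTerm_nonneg (apos : ∀ n, 0 < a n) (m k : ℕ) : 0 ≤ nodeTerm a m k :=
  Finset.sum_nonneg fun _ _ => (apos _).le

theorem nodeTerm_anti (amono : Antitone a) {m m' : ℕ} (hm : m ≤ m') (k : ℕ) :
    nodeTerm a m' k ≤ nodeTerm a m k :=
  Finset.sum_le_sum fun i _ => amono (by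
    have := Nat.mul_le_mul_right (2 ^ k) hm
    omega)

theorem nodeTerm_one_sum (n : ℕ) :
    ∑ k ∈ Finset.range n, nodeTerm a 1 k = ∑ i ∈ Finset.range (2 ^ n - 1), a i := by
  induction n with
  | zero => simp
  | succ n ih =>
    have h1 : 1 ≤ 2 ^ n := Nat.one_le_two_pow
    rw [Finset.sum_range_succ, ih, show 2 ^ (n + 1) - 1 = (2 ^ n - 1) + 2 ^ n by
      rw [pow_succ]; omega, Finset.sum_range_add]
    congr 1
    refine Finset.sum_congr rfl fun i _ => ?_
    congr 1
    omega

theorem nodeTerm_summable (apos : ∀ n, 0 < a n) (amono : Antitone a) (asum : Summable a)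
    {m : ℕ} (hm : 1 ≤ m) : Summable (nodeTerm a m) := by
  have h1 : Summable (nodeTerm a 1) := by
    refine summable_of_sum_range_le (c := ∑' i, a i) (nodeTerm_nonneg apos 1) fun n => ?_
    rw [nodeTerm_one_sum]
    exact asum.sum_le_tsum _ fun i _ => (apos i).le
  exact Summable.of_nonneg_of_le (nodeTerm_nonneg apos m) (nodeTerm_anti amono hm) h1

theorem nodeLen_eq (m : ℕ) : nodeLen a m = ∑' k, nodeTerm a m k := rfl

theorem nodeLen_nonneg (apos : ∀ n, 0 < a n) (m : ℕ) : 0 ≤ nodeLen a m :=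
  tsum_nonneg fun k => nodeTerm_nonneg apos m k

theorem nodeLen_anti (apos : ∀ n, 0 < a n) (amono : Antitone a) (asum : Summable a)
    {m m' : ℕ} (hm : 1 ≤ m) (hmm : m ≤ m') : nodeLen a m' ≤ nodeLen a m :=
  Summable.tsum_le_tsum (nodeTerm_anti amono hmm)
    (nodeTerm_summable apos amono asum (hm.trans hmm)) (nodeTerm_summable apos amono asum hm)

theorem nodeLen_rec (apos : ∀ n, 0 < a n) (amono : Antitone a) (asum : Summable a)
    {m : ℕ} (hm : 1 ≤ m) :
    nodeLen a m = a (m - 1) + nodeLen a (2 * m) + nodeLen a (2 * m + 1) := by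
  rw [nodeLen_eq, (nodeTerm_summable apos amono asum hm).tsum_eq_zero_add, nodeLen_eq, nodeLen_eq,
    add_assoc, ← Summable.tsum_add (nodeTerm_summable apos amono asum (by omega))
      (nodeTerm_summable apos amono asum (by omega))]
  congr 1
  · simp [nodeTerm]
  · refine tsum_congr fun k => ?_
    unfold nodeTerm
    rw [pow_succ, mul_two, Finset.sum_range_add]
    congr 1
    · refine Finset.sum_congr rfl fun i _ => ?_
      congr 2
      ring
    · refine Finset.sum_congr rfl fun i _ => ?_
      congr 2
      ring

theorem nodeLen_small (apos : ∀ n, 0 < a n) (amono : Antitone a) (asum : Summable a)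
    {ρ : ℝ} (hρ : 0 < ρ) : ∃ M : ℕ, ∀ m, M ≤ m → nodeLen a m < ρ := by
  have h1 : Tendsto (fun m => ∑' k, nodeTerm a m k) atTop (𝓝 (∑' _ : ℕ, (0 : ℝ))) := by
    refine tendsto_tsum_of_dominated_convergence
      (nodeTerm_summable apos amono asum le_rfl) ?_ ?_
    · intro k
      have : Tendsto (fun m => ∑ i ∈ Finset.range (2 ^ k), a (m * 2 ^ k + i - 1)) atTop
          (𝓝 (∑ i ∈ Finset.range (2 ^ k), (0 : ℝ))) := by
        refine tendsto_finsetSum _ fun i _ => ?_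
        refine asum.tendsto_atTop_zero.comp ?_
        refine tendsto_atTop_mono (f := fun m : ℕ => m - 1) ?_ (tendsto_sub_atTop_nat 1)
        intro m
        have := Nat.mul_le_mul_left m (Nat.one_le_two_pow (n := k))
        omega
      rw [Finset.sum_const_zero] at this
      exact this
    · filter_upwards [eventually_ge_atTop 1] with m hm k
      rw [Real.norm_of_nonneg (nodeTerm_nonneg apos m k)]
      exact nodeTerm_anti amono hm k
  rw [tsum_zero] at h1
  obtain ⟨M, hM⟩ := eventually_atTop.1 (h1.eventually (gt_mem_nhds hρ))
  exact ⟨M, hM⟩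

theorem leftEnd_even (k j : ℕ) : leftEnd a (k + 1) (2 * j) = leftEnd a k j := by
  rw [leftEnd]
  simp

theorem leftEnd_odd (k j : ℕ) : leftEnd a (k + 1) (2 * j + 1) =
    leftEnd a k j + nodeLen a (2 * (2 ^ k + j)) + a (2 ^ k + j - 1) := by
  rw [leftEnd]
  have h1 : (2 * j + 1) / 2 = j := by omega
  have h2 : 2 ^ (k + 1) + (2 * j + 1) - 1 = 2 * (2 ^ k + j) := by rw [pow_succ]; omega
  rw [h1, h2, if_neg (by omega)]

theorem gap_bounds (apos : ∀ n, 0 < a n) (amono : Antitone a) (asum : Summable a)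
    {K q K' q' : ℕ} (hm : 2 ^ K + q ≤ 2 ^ K' + q') (k : ℕ) :
    ∀ j, j + 1 < 2 ^ k →
      0 ≤ leftEnd a (K' + k) (q' * 2 ^ k + j + 1) - leftEnd a (K' + k) (q' * 2 ^ k + j)
          - nodeLen a ((2 ^ K' + q') * 2 ^ k + j) ∧
      leftEnd a (K' + k) (q' * 2 ^ k + j + 1) - leftEnd a (K' + k) (q' * 2 ^ k + j)
          - nodeLen a ((2 ^ K' + q') * 2 ^ k + j) ≤
      leftEnd a (K + k) (q * 2 ^ k + j + 1) - leftEnd a (K + k) (q * 2 ^ k + j)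
          - nodeLen a ((2 ^ K + q) * 2 ^ k + j) := by
  induction k with
  | zero => intro j hj; simp at hj
  | succ k ih =>
    -- formulas for the two kinds of neighbours
    have ev : ∀ K q i : ℕ,
        leftEnd a (K + (k + 1)) (q * 2 ^ (k + 1) + 2 * i + 1)
          - leftEnd a (K + (k + 1)) (q * 2 ^ (k + 1) + 2 * i)
          - nodeLen a ((2 ^ K + q) * 2 ^ (k + 1) + 2 * i) =
        a ((2 ^ K + q) * 2 ^ k + i - 1) := by
      intro K q i
      rw [show q * 2 ^ (k + 1) + 2 * i + 1 = 2 * (q * 2 ^ k + i) + 1 by ring,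
        show q * 2 ^ (k + 1) + 2 * i = 2 * (q * 2 ^ k + i) by ring, ← add_assoc K k 1,
        leftEnd_odd, leftEnd_even,
        show 2 ^ (K + k) + (q * 2 ^ k + i) = (2 ^ K + q) * 2 ^ k + i by ring,
        show (2 ^ K + q) * 2 ^ (k + 1) + 2 * i = 2 * ((2 ^ K + q) * 2 ^ k + i) by ring]
      ring
    have od : ∀ K q i : ℕ,
        leftEnd a (K + (k + 1)) (q * 2 ^ (k + 1) + (2 * i + 1) + 1)
          - leftEnd a (K + (k + 1)) (q * 2 ^ (k + 1) + (2 * i + 1))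
          - nodeLen a ((2 ^ K + q) * 2 ^ (k + 1) + (2 * i + 1)) =
        leftEnd a (K + k) (q * 2 ^ k + i + 1) - leftEnd a (K + k) (q * 2 ^ k + i)
          - nodeLen a ((2 ^ K + q) * 2 ^ k + i) := by
      intro K q i
      have h1 : 1 ≤ (2 ^ K + q) * 2 ^ k + i := by
        have : 0 < (2 ^ K + q) * 2 ^ k := by positivity
        omega
      rw [nodeLen_rec apos amono asum h1,
        show q * 2 ^ (k + 1) + (2 * i + 1) + 1 = 2 * (q * 2 ^ k + i + 1) by ring,
        show q * 2 ^ (k + 1) + (2 * i + 1) = 2 * (q * 2 ^ k + i) + 1 by ring, ← add_assoc K k 1,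
        leftEnd_odd, leftEnd_even,
        show 2 ^ (K + k) + (q * 2 ^ k + i) = (2 ^ K + q) * 2 ^ k + i by ring,
        show (2 ^ K + q) * 2 ^ (k + 1) + (2 * i + 1) = 2 * ((2 ^ K + q) * 2 ^ k + i) + 1 by ring]
      ring
    intro j hj
    rcases Nat.even_or_odd' j with ⟨i, rfl | rfl⟩
    · rw [ev, ev]
      refine ⟨(apos _).le, amono ?_⟩
      have := Nat.mul_le_mul_right (2 ^ k) hm
      omega
    · rw [od, od]
      apply ih
      rw [pow_succ] at hj
      omega

theorem leftEnd_diff (apos : ∀ n, 0 < a n) (amono : Antitone a) (asum : Summable a)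
    {K q K' q' : ℕ} (hm : 2 ^ K + q ≤ 2 ^ K' + q') (k : ℕ) {i j : ℕ} (hij : i ≤ j)
    (hj : j < 2 ^ k) :
    0 ≤ leftEnd a (K' + k) (q' * 2 ^ k + j) - leftEnd a (K' + k) (q' * 2 ^ k + i) ∧
    leftEnd a (K' + k) (q' * 2 ^ k + j) - leftEnd a (K' + k) (q' * 2 ^ k + i) ≤
      leftEnd a (K + k) (q * 2 ^ k + j) - leftEnd a (K + k) (q * 2 ^ k + i) := by
  induction j, hij using Nat.le_induction with
  | base => simp
  | succ j hij ih =>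
    have h1 := ih (by omega)
    have h2 := gap_bounds apos amono asum hm k j hj
    have h3 : 1 ≤ (2 ^ K + q) * 2 ^ k + j := by
      have : 0 < (2 ^ K + q) * 2 ^ k := by positivity
      omega
    have h4 := nodeLen_anti apos amono asum (m := (2 ^ K + q) * 2 ^ k + j)
      (m' := (2 ^ K' + q') * 2 ^ k + j) h3 (by
        have := Nat.mul_le_mul_right (2 ^ k) hm
        omega)
    have h5 := nodeLen_nonneg apos ((2 ^ K' + q') * 2 ^ k + j)
    rw [← add_assoc, ← add_assoc]
    constructor <;> linarith [h2.1, h2.2, h1.1, h1.2]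

theorem leftEnd_dist (apos : ∀ n, 0 < a n) (amono : Antitone a) (asum : Summable a)
    {K q K' q' : ℕ} (hm : 2 ^ K + q ≤ 2 ^ K' + q') (k : ℕ) {i j : ℕ} (hi : i < 2 ^ k)
    (hj : j < 2 ^ k) :
    dist (leftEnd a (K' + k) (q' * 2 ^ k + i)) (leftEnd a (K' + k) (q' * 2 ^ k + j)) ≤
      dist (leftEnd a (K + k) (q * 2 ^ k + i)) (leftEnd a (K + k) (q * 2 ^ k + j)) := by
  rcases le_total i j with h | h
  · have := leftEnd_diff apos amono asum hm k h hj
    rw [dist_comm, dist_comm (leftEnd a (K + k) (q * 2 ^ k + i)), Real.dist_eq, Real.dist_eq,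
      abs_of_nonneg this.1]
    exact this.2.trans (le_abs_self _)
  · have := leftEnd_diff apos amono asum hm k h hi
    rw [Real.dist_eq, Real.dist_eq, abs_of_nonneg this.1]
    exact this.2.trans (le_abs_self _)

/-- step interval -/
def stepI (a : ℕ → ℝ) (k j : ℕ) : Set ℝ :=
  Set.Icc (leftEnd a k j) (leftEnd a k j + nodeLen a (2 ^ k + j))

theorem stepI_sub (apos : ∀ n, 0 < a n) (amono : Antitone a) (asum : Summable a) (k j : ℕ) :
    stepI a (k + 1) j ⊆ stepI a k (j / 2) := by
  have h1 : ∀ i, 1 ≤ 2 ^ k + i := fun i => by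
    have := Nat.one_le_two_pow (n := k)
    omega
  rcases Nat.even_or_odd' j with ⟨i, rfl | rfl⟩
  · have h2 := nodeLen_rec apos amono asum (h1 i)
    have h3 := nodeLen_nonneg apos (2 * (2 ^ k + i) + 1)
    have h4 := apos (2 ^ k + i - 1)
    rw [show 2 * i / 2 = i by omega]
    unfold stepI
    rw [leftEnd_even, show 2 ^ (k + 1) + 2 * i = 2 * (2 ^ k + i) by ring]
    exact Set.Icc_subset_Icc le_rfl (by linarith)
  · have h2 := nodeLen_rec apos amono asum (h1 i)
    have h3 := nodeLen_nonneg apos (2 * (2 ^ k + i))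
    have h4 := apos (2 ^ k + i - 1)
    rw [show (2 * i + 1) / 2 = i by omega]
    unfold stepI
    rw [leftEnd_odd, show 2 ^ (k + 1) + (2 * i + 1) = 2 * (2 ^ k + i) + 1 by ring]
    exact Set.Icc_subset_Icc (by linarith) (by linarith)

theorem stepI_sub' (apos : ∀ n, 0 < a n) (amono : Antitone a) (asum : Summable a) (K k j : ℕ) :
    stepI a (K + k) j ⊆ stepI a K (j / 2 ^ k) := by
  induction k generalizing j with
  | zero => simp
  | succ k ih =>
    refine (stepI_sub apos amono asum (K + k) j).trans ((ih (j / 2)).trans ?_)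
    rw [Nat.div_div_eq_div_mul, pow_succ, mul_comm]

theorem leftEnd_mem_stepI (apos : ∀ n, 0 < a n) (k j : ℕ) : leftEnd a k j ∈ stepI a k j :=
  ⟨le_rfl, by linarith [nodeLen_nonneg apos (2 ^ k + j)]⟩

theorem leftEnd_shift (K k j : ℕ) : leftEnd a (K + k) (2 ^ k * j) = leftEnd a K j := by
  induction k with
  | zero => simp
  | succ k ih => rw [← add_assoc, show 2 ^ (k + 1) * j = 2 * (2 ^ k * j) by ring, leftEnd_even, ih]

theorem mem_cantor_iff {x : ℝ} : x ∈ cantorSetOf a ↔ ∀ k, ∃ j < 2 ^ k, x ∈ stepI a k j := by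
  simp only [cantorSetOf, mem_iInter, mem_iUnion, Finset.mem_range, exists_prop, stepI]

theorem leftEnd_mem_cantor (apos : ∀ n, 0 < a n) (amono : Antitone a) (asum : Summable a)
    {k j : ℕ} (hj : j < 2 ^ k) : leftEnd a k j ∈ cantorSetOf a := by
  rw [mem_cantor_iff]
  intro l
  rcases le_total k l with h | h
  · obtain ⟨d, rfl⟩ := Nat.exists_eq_add_of_le h
    refine ⟨2 ^ d * j, ?_, ?_⟩
    · rw [pow_add, mul_comm]
      exact Nat.mul_lt_mul_of_pos_right hj (by positivity)
    · rw [← leftEnd_shift k d j]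
      exact leftEnd_mem_stepI apos _ _
  · obtain ⟨d, rfl⟩ := Nat.exists_eq_add_of_le h
    refine ⟨j / 2 ^ d, ?_, stepI_sub' apos amono asum l d j (leftEnd_mem_stepI apos _ _)⟩
    rw [Nat.div_lt_iff_lt_mul (by positivity), ← pow_add]
    exact hj

theorem isCompact_cantor : IsCompact (cantorSetOf a) := by
  have h1 : ∀ k, IsCompact (⋃ j ∈ Finset.range (2 ^ k),
      Set.Icc (leftEnd a k j) (leftEnd a k j + nodeLen a (2 ^ k + j))) :=
    fun k => (Finset.range (2 ^ k)).isCompact_biUnion fun j _ => isCompact_Icc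
  exact (h1 0).of_isClosed_subset (isClosed_iInter fun k => (h1 k).isClosed) (iInter_subset _ 0)

theorem cantor_packSup_le (apos : ∀ n, 0 < a n) (amono : Antitone a) (asum : Summable a)
    {A : ℝ} {h : ℝ → ℝ≥0∞} {τ : ℝ≥0∞} (hτ0 : 0 < τ) (hτ : τ ≠ ∞)
    (hdb : ∀ x : ℝ, 0 < x → 2 * x ≤ A → τ * h (2 * x) ≤ h x) {δ : ℝ} (hδ : δ ≤ A)
    {K q : ℕ} (hq : q < 2 ^ K) :
    packSup h δ (cantorSetOf a) ≤
      2 ^ (K + 1) * (τ⁻¹ * packSup h δ (cantorSetOf a ∩ stepI a K q)) := by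
  classical
  refine packSup_le fun T hT => ?_
  obtain ⟨ρ, hρ, hρT⟩ : ∃ ρ : ℝ, 0 < ρ ∧ ∀ p ∈ T, ρ ≤ p.2 := by
    rcases T.eq_empty_or_nonempty with rfl | hne
    · exact ⟨1, one_pos, by simp⟩
    · obtain ⟨p, hp, hmin⟩ := T.exists_min_image (fun p => p.2) hne
      exact ⟨p.2, (hT.1 p hp).2.1, hmin⟩
  obtain ⟨k, hk⟩ := nodeLen_small apos amono asum hρ
  have hlen : ∀ j, nodeLen a (2 ^ (K + 1 + k) + j) < ρ := fun j => hk _ (by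
    have h1 : k < 2 ^ k := Nat.lt_two_pow_self
    have h2 : 2 ^ k ≤ 2 ^ (K + 1 + k) := Nat.pow_le_pow_right (by norm_num) (by omega)
    omega)
  have hn : ∀ p ∈ T, ∃ n < 2 ^ (K + 1 + k), p.1 ∈ stepI a (K + 1 + k) n :=
    fun p hp => mem_cantor_iff.1 (hT.1 p hp).1 _
  choose! n hn hnI using hn
  have h2k : 0 < 2 ^ k := by positivity
  have hmaps : ∀ p ∈ T, n p / 2 ^ k ∈ Finset.range (2 ^ (K + 1)) := fun p hp => by
    rw [Finset.mem_range, Nat.div_lt_iff_lt_mul h2k, ← pow_add]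
    exact hn p hp
  rw [← Finset.sum_fiberwise_of_maps_to hmaps]
  have hcls : ∀ q' ∈ Finset.range (2 ^ (K + 1)),
      ∑ p ∈ T with n p / 2 ^ k = q', h (2 * p.2) ≤
        τ⁻¹ * packSup h δ (cantorSetOf a ∩ stepI a K q) := by
    intro q' _
    set T' := T.filter fun p => n p / 2 ^ k = q' with hT'
    have hmem : ∀ p ∈ T', p ∈ T ∧ n p / 2 ^ k = q' := fun p hp => Finset.mem_filter.1 hp
    have h1 : ∑ p ∈ T', h (2 * (p.2 / 2)) ≤ packSup h δ (cantorSetOf a ∩ stepI a K q) := by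
      refine sum_le_packSup T' (fun p => leftEnd a (K + k) (q * 2 ^ k + n p % 2 ^ k))
        (fun p => p.2 / 2) ?_ ?_
      · intro p hp
        have h1 := hT.1 p (hmem p hp).1
        have h2 : n p % 2 ^ k < 2 ^ k := Nat.mod_lt _ h2k
        refine ⟨⟨?_, ?_⟩, by linarith, by linarith⟩
        · apply leftEnd_mem_cantor apos amono asum
          have := Nat.mul_le_mul_right (2 ^ k) (Nat.succ_le_of_lt hq)
          rw [pow_add]
          rw [Nat.succ_mul] at this
          omega
        · have h3 := stepI_sub' apos amono asum K k (q * 2 ^ k + n p % 2 ^ k)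
            (leftEnd_mem_stepI apos _ _)
          have h4 : (q * 2 ^ k + n p % 2 ^ k) / 2 ^ k = q := by
            rw [mul_comm, Nat.mul_add_div h2k, Nat.div_eq_of_lt h2, add_zero]
          rwa [h4] at h3
      · intro p hp p' hp' hne
        have h1 := hT.2 p (hmem p hp).1 p' (hmem p' hp').1 hne
        have h2 := leftEnd_dist apos amono asum (K := K) (q := q) (K' := K + 1) (q' := q')
          (by rw [pow_succ]; omega) k (Nat.mod_lt (n p) h2k) (Nat.mod_lt (n p') h2k)
        have e : ∀ p ∈ T', q' * 2 ^ k + n p % 2 ^ k = n p := by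
          intro p hp
          rw [← (hmem p hp).2, mul_comm]
          exact Nat.div_add_mod _ _
        rw [e p hp, e p' hp'] at h2
        have h3 := hnI p (hmem p hp).1
        have h4 := hnI p' (hmem p' hp').1
        have h5 := hlen (n p)
        have h6 := hlen (n p')
        have h7 := hρT p (hmem p hp).1
        have h8 := hρT p' (hmem p' hp').1
        refine le_trans ?_ h2
        have h9 : dist p.1 p'.1 ≤ dist (leftEnd a (K + 1 + k) (n p))
            (leftEnd a (K + 1 + k) (n p')) + ρ := by
          rw [Real.dist_eq, Real.dist_eq, abs_le]
          have g1 := le_abs_self (leftEnd a (K + 1 + k) (n p) - leftEnd a (K + 1 + k) (n p'))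
          have g2 := neg_abs_le (leftEnd a (K + 1 + k) (n p) - leftEnd a (K + 1 + k) (n p'))
          constructor <;> linarith [h3.1, h3.2, h4.1, h4.2]
        linarith
    calc ∑ p ∈ T', h (2 * p.2) ≤ ∑ p ∈ T', τ⁻¹ * h (2 * (p.2 / 2)) := by
          refine Finset.sum_le_sum fun p hp => ?_
          have h2 := hT.1 p (hmem p hp).1
          rw [← ENNReal.mul_le_iff_le_inv hτ0.ne' hτ]
          have := hdb p.2 h2.2.1 (by linarith)
          rwa [show 2 * (p.2 / 2) = p.2 by ring]
      _ = τ⁻¹ * ∑ p ∈ T', h (2 * (p.2 / 2)) := by rw [Finset.mul_sum]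
      _ ≤ _ := by gcongr
  refine (Finset.sum_le_card_nsmul _ _ _ hcls).trans ?_
  rw [Finset.card_range, nsmul_eq_mul]
  push_cast
  exact le_rfl

theorem cantor_top (apos : ∀ n, 0 < a n) (amono : Antitone a) (asum : Summable a)
    {A : ℝ} (hA : 0 < A) {h : ℝ → ℝ≥0∞} {τ : ℝ≥0∞} (hτ0 : 0 < τ) (hτ : τ ≠ ∞)
    (hdb : ∀ x : ℝ, 0 < x → 2 * x ≤ A → τ * h (2 * x) ≤ h x)
    (htop : P0h A h (cantorSetOf a) = ∞) : Ph A h (cantorSetOf a) = ∞ := by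
  refine iInf₂_eq_top.2 fun t ht => ?_
  have hτi' : τ⁻¹ ≠ ∞ := ENNReal.inv_ne_top.2 hτ0.ne'
  have hC := isCompact_cantor (a := a)
  haveI : CompactSpace (cantorSetOf a) := isCompact_iff_compactSpace.1 hC
  haveI : Nonempty (cantorSetOf a) :=
    ⟨⟨leftEnd a 0 0, leftEnd_mem_cantor apos amono asum (by norm_num)⟩⟩
  obtain ⟨i, x, hx⟩ := nonempty_interior_of_iUnion_of_closed
    (f := fun i => (Subtype.val ⁻¹' closure (t i) : Set (cantorSetOf a)))
    (fun i => isClosed_closure.preimage continuous_subtype_val) (by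
      rw [eq_univ_iff_forall]
      intro x
      have hx := x.2
      rw [mem_iUnion]
      obtain ⟨i, hi⟩ := mem_iUnion.1 (ht ▸ hx : (x : ℝ) ∈ ⋃ n, t n)
      exact ⟨i, subset_closure hi⟩)
  rw [mem_interior_iff_mem_nhds, Metric.mem_nhds_iff] at hx
  obtain ⟨ρ, hρ, hball⟩ := hx
  obtain ⟨k, hk⟩ := nodeLen_small apos amono asum hρ
  obtain ⟨q, hq, hxq⟩ := mem_cantor_iff.1 x.2 k
  have hlen : nodeLen a (2 ^ k + q) < ρ := hk _ (by
    have h1 : k < 2 ^ k := Nat.lt_two_pow_self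
    omega)
  have hsub : cantorSetOf a ∩ stepI a k q ⊆ closure (t i) := by
    rintro y ⟨hyC, hyI⟩
    have : (⟨y, hyC⟩ : cantorSetOf a) ∈ Metric.ball x ρ := by
      rw [Metric.mem_ball, Subtype.dist_eq, Real.dist_eq, abs_lt]
      dsimp only
      constructor <;> linarith [hyI.1, hyI.2, hxq.1, hxq.2]
    exact hball this
  have hi : P0h A h (t i) = ∞ := by
    rw [P0h_eq, iInf_eq_top] at htop ⊢
    rintro ⟨d, hd0, hdA⟩
    have h1 := htop ⟨d, hd0, hdA⟩
    dsimp only at h1 ⊢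
    by_contra hfin
    have h2 := cantor_packSup_le apos amono asum hτ0 hτ hdb hdA hq
    rw [h1, top_le_iff] at h2
    have h3 : packSup h d (cantorSetOf a ∩ stepI a k q) ≤ τ⁻¹ * packSup h d (t i) :=
      (packSup_mono le_rfl hsub).trans (packSup_closure_le hτ0 hτ hdb hdA _)
    have h4 : packSup h d (cantorSetOf a ∩ stepI a k q) ≠ ∞ :=
      ne_top_of_le_ne_top (ENNReal.mul_ne_top hτi' hfin) h3
    exact ENNReal.mul_ne_top (by simp) (ENNReal.mul_ne_top hτi' h4) h2
  exact ENNReal.tsum_eq_top_of_eq_top ⟨i, hi⟩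

end Tree

/-- Theorem: for the Cantor set `C_a` of a summable
non-increasing positive sequence `a` and any dimension function `h`:
if `P₀^h(C_a) = ∞` then `P^h(C_a) = ∞`, and if `P₀^h(C_a) > 0` then
`P^h(C_a) > 0`. -/
theorem packing_eq_prepacking_cantor (A : ℝ) (a : ℕ → ℝ)
    (apos : ∀ n, 0 < a n) (amono : ∀ n, a (n + 1) ≤ a n) (asum : Summable a)
    (h : ℝ → ℝ≥0∞) (hd : IsDimFun A h) :
    (P0h A h (cantorSetOf a) = ∞ → Ph A h (cantorSetOf a) = ∞) ∧
    (0 < P0h A h (cantorSetOf a) → 0 < Ph A h (cantorSetOf a)) := by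
  obtain ⟨τ, hτ0, hτ, hdb⟩ := hd.doubling
  have am : Antitone a := antitone_nat_of_succ_le amono
  refine ⟨cantor_top apos am asum hd.posA hτ0 hτ hdb, fun hpos => ?_⟩
  by_cases htop : P0h A h (cantorSetOf a) = ∞
  · rw [cantor_top apos am asum hd.posA hτ0 hτ hdb htop]
    exact ENNReal.zero_lt_top
  · exact (ENNReal.mul_pos hτ0.ne' hpos.ne').trans_le
      (P0h_le_Ph hd.posA hτ0 hτ hdb isCompact_cantor htop)
end

section
/- Let a = {aₙ} be a non-increasing, summable sequence of positive real numbers with tails rₙ^{(a)} = Σ_{j≥n} aⱼ, and let C_a be the associated Cantor set. For any dimension function h: P^h(C_a) = 0 if and only if limsup_{n→∞} n·h(rₙ^{(a)}/n) = 0; P^h(C_a) = ∞ if and only if limsup_{n→∞} n·h(rₙ^{(a)}/n) = ∞; and 0 < P^h(C_a) < ∞ if and only if 0 < limsup_{n→∞} n·h(rₙ^{(a)}/n) < ∞. -/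
open Set Filter Metric MeasureTheory
open scoped ENNReal NNReal Topology

namespace CantorAux

/-- Level-`k` block of the subtree rooted at `m`. -/
def term (a : ℕ → ℝ) (m k : ℕ) : ℝ := ∑ i ∈ Finset.range (2 ^ k), a (m * 2 ^ k + i - 1)

/-- Average length of the level-`k` intervals. -/
noncomputable def sAvg (a : ℕ → ℝ) (k : ℕ) : ℝ := rTail a (2 ^ k - 1) / 2 ^ k

section
variable {a : ℕ → ℝ}

theorem anti (amono : ∀ n, a (n + 1) ≤ a n) : Antitone a := antitone_nat_of_succ_le amono

theorem term_nonneg (apos : ∀ n, 0 < a n) (m k : ℕ) : 0 ≤ term a m k :=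
  Finset.sum_nonneg fun _ _ => (apos _).le

theorem sum_term_one (a : ℕ → ℝ) (n : ℕ) :
    ∑ k ∈ Finset.range n, term a 1 k = ∑ i ∈ Finset.range (2 ^ n - 1), a i := by
  induction n with
  | zero => simp
  | succ n ih =>
    have h1 : 1 ≤ 2 ^ n := Nat.one_le_two_pow
    have h2 : 2 ^ (n + 1) - 1 = (2 ^ n - 1) + 2 ^ n := by rw [pow_succ]; omega
    rw [Finset.sum_range_succ, ih, h2, Finset.sum_range_add]
    congr 1
    refine Finset.sum_congr rfl fun i _ => ?_
    congr 1; omega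

theorem hasSum_term_one (apos : ∀ n, 0 < a n) (asum : Summable a) :
    HasSum (term a 1) (∑' i, a i) := by
  rw [hasSum_iff_tendsto_nat_of_nonneg (fun k => term_nonneg apos 1 k)]
  have h1 := asum.hasSum.tendsto_sum_nat
  have h2 : Tendsto (fun n : ℕ => 2 ^ n - 1) atTop atTop := by
    refine tendsto_atTop_mono (fun n => ?_) tendsto_id
    have := Nat.lt_two_pow_self (n := n)
    simp only [id]; omega
  refine (h1.comp h2).congr fun n => ?_
  rw [sum_term_one]; rfl

theorem term_anti (amono : ∀ n, a (n + 1) ≤ a n) {m m' : ℕ} (hmm : m ≤ m') (k : ℕ) :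
    term a m' k ≤ term a m k := by
  refine Finset.sum_le_sum fun i _ => anti amono ?_
  have := Nat.mul_le_mul_right (2 ^ k) hmm
  omega

theorem summable_term (apos : ∀ n, 0 < a n) (amono : ∀ n, a (n + 1) ≤ a n) (asum : Summable a)
    {m : ℕ} (hm : 1 ≤ m) : Summable (term a m) :=
  Summable.of_nonneg_of_le (fun k => term_nonneg apos m k) (fun k => term_anti amono hm k)
    (hasSum_term_one apos asum).summable

theorem nodeLen_eq (a : ℕ → ℝ) (m : ℕ) : nodeLen a m = ∑' k, term a m k := rfl

theorem nodeLen_anti (apos : ∀ n, 0 < a n) (amono : ∀ n, a (n + 1) ≤ a n) (asum : Summable a)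
    {m m' : ℕ} (hm : 1 ≤ m) (hmm : m ≤ m') : nodeLen a m' ≤ nodeLen a m := by
  rw [nodeLen_eq, nodeLen_eq]
  exact (summable_term apos amono asum (hm.trans hmm)).tsum_le_tsum
    (fun k => term_anti amono hmm k) (summable_term apos amono asum hm)

theorem nodeLen_nonneg (apos : ∀ n, 0 < a n) (m : ℕ) : 0 ≤ nodeLen a m :=
  tsum_nonneg fun k => term_nonneg apos m k

theorem nodeLen_split (apos : ∀ n, 0 < a n) (amono : ∀ n, a (n + 1) ≤ a n) (asum : Summable a)
    {m : ℕ} (hm : 1 ≤ m) :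
    nodeLen a m = a (m - 1) + nodeLen a (2 * m) + nodeLen a (2 * m + 1) := by
  simp only [nodeLen_eq]
  rw [(summable_term apos amono asum hm).tsum_eq_zero_add, add_assoc,
    ← (summable_term apos amono asum (m := 2 * m) (by omega)).tsum_add
      (summable_term apos amono asum (m := 2 * m + 1) (by omega))]
  congr 1
  · simp [term]
  · congr 1
    funext k
    unfold term
    rw [pow_succ, mul_two, Finset.sum_range_add]
    congr 1
    · refine Finset.sum_congr rfl fun i _ => ?_
      congr 2; ring
    · refine Finset.sum_congr rfl fun i _ => ?_
      congr 2; ring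

theorem rTail_split (asum : Summable a)
    (n m : ℕ) :
    rTail a n = ∑ i ∈ Finset.range m, a (n + i) + rTail a (n + m) := by
  unfold rTail
  have h : Summable fun k => a (n + k) := by
    simpa [add_comm] using (summable_nat_add_iff n).2 asum
  rw [← h.sum_add_tsum_nat_add m]
  congr 1
  refine tsum_congr fun k => ?_
  congr 1; ring

theorem rTail_nonneg (apos : ∀ n, 0 < a n) (n : ℕ) : 0 ≤ rTail a n :=
  tsum_nonneg fun _ => (apos _).le

theorem rTail_anti (apos : ∀ n, 0 < a n) (asum : Summable a)
    {n m : ℕ} (h : n ≤ m) : rTail a m ≤ rTail a n := by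
  obtain ⟨d, rfl⟩ := Nat.exists_eq_add_of_le h
  rw [rTail_split asum n d]
  have : 0 ≤ ∑ i ∈ Finset.range d, a (n + i) := Finset.sum_nonneg fun _ _ => (apos _).le
  linarith

theorem rTail_pos (apos : ∀ n, 0 < a n) (asum : Summable a)
    (n : ℕ) : 0 < rTail a n := by
  rw [rTail_split asum n 1]
  have := rTail_nonneg apos (n + 1)
  have := apos n
  simp; linarith

theorem sum_two (f : ℕ → ℝ) (n : ℕ) :
    ∑ j ∈ Finset.range (2 * n), f j = ∑ j ∈ Finset.range n, (f (2 * j) + f (2 * j + 1)) := by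
  induction n with
  | zero => simp
  | succ n ih =>
    rw [show 2 * (n + 1) = 2 * n + 1 + 1 by ring, Finset.sum_range_succ, Finset.sum_range_succ, ih,
      Finset.sum_range_succ]
    ring

theorem sum_nodeLen (apos : ∀ n, 0 < a n) (amono : ∀ n, a (n + 1) ≤ a n) (asum : Summable a)
    (k : ℕ) :
    ∑ j ∈ Finset.range (2 ^ k), nodeLen a (2 ^ k + j) = rTail a (2 ^ k - 1) := by
  induction k with
  | zero =>
    simp only [pow_zero, Finset.range_one, Finset.sum_singleton, add_zero, Nat.sub_self]
    rw [nodeLen_eq, (hasSum_term_one apos asum).tsum_eq]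
    simp [rTail]
  | succ k ih =>
    have h1 : 1 ≤ 2 ^ k := Nat.one_le_two_pow
    have h2 : 2 ^ (k + 1) - 1 = (2 ^ k - 1) + 2 ^ k := by rw [pow_succ]; omega
    have h3 := rTail_split asum (2 ^ k - 1) (2 ^ k)
    rw [← h2] at h3
    have h4 : ∑ j ∈ Finset.range (2 ^ k), nodeLen a (2 ^ k + j)
        = ∑ j ∈ Finset.range (2 ^ k), a (2 ^ k - 1 + j) +
          ∑ j ∈ Finset.range (2 ^ (k + 1)), nodeLen a (2 ^ (k + 1) + j) := by
      rw [show Finset.range (2 ^ (k + 1)) = Finset.range (2 * 2 ^ k) by rw [pow_succ, mul_comm],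
        sum_two, ← Finset.sum_add_distrib]
      refine Finset.sum_congr rfl fun j _ => ?_
      rw [nodeLen_split apos amono asum (by omega : 1 ≤ 2 ^ k + j),
        show 2 ^ k + j - 1 = 2 ^ k - 1 + j by omega,
        show 2 * (2 ^ k + j) = 2 ^ (k + 1) + 2 * j by ring, add_assoc, add_assoc]
    linarith

theorem sAvg_le_nodeLen (apos : ∀ n, 0 < a n) (amono : ∀ n, a (n + 1) ≤ a n) (asum : Summable a)
    {k m : ℕ} (hm : 1 ≤ m) (hmk : m ≤ 2 ^ k) : sAvg a k ≤ nodeLen a m := by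
  unfold sAvg
  rw [div_le_iff₀ (by positivity), ← sum_nodeLen apos amono asum]
  calc _ ≤ ∑ j ∈ Finset.range (2 ^ k), nodeLen a m :=
        Finset.sum_le_sum fun j _ => nodeLen_anti apos amono asum hm (by omega)
    _ = _ := by simp [mul_comm]

theorem nodeLen_le_sAvg (apos : ∀ n, 0 < a n) (amono : ∀ n, a (n + 1) ≤ a n) (asum : Summable a)
    {k m : ℕ} (hmk : 2 ^ (k + 1) ≤ m) : nodeLen a m ≤ sAvg a k := by
  unfold sAvg
  rw [le_div_iff₀ (by positivity), ← sum_nodeLen apos amono asum]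
  calc nodeLen a m * 2 ^ k = ∑ j ∈ Finset.range (2 ^ k), nodeLen a m := by simp [mul_comm]
    _ ≤ _ := Finset.sum_le_sum fun j hj => by
        have : 1 ≤ 2 ^ k := Nat.one_le_two_pow
        rw [pow_succ] at hmk
        rw [Finset.mem_range] at hj
        exact nodeLen_anti apos amono asum (by omega) (by omega)

theorem sAvg_pos (apos : ∀ n, 0 < a n) (asum : Summable a)
    (k : ℕ) : 0 < sAvg a k := div_pos (rTail_pos apos asum _) (by positivity)

theorem sAvg_anti (apos : ∀ n, 0 < a n) (asum : Summable a)
    : Antitone (sAvg a) := by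
  intro k l hkl
  have h : (2 : ℕ) ^ k ≤ 2 ^ l := Nat.pow_le_pow_right (by norm_num) hkl
  unfold sAvg
  gcongr
  · exact rTail_nonneg apos _
  · exact rTail_anti apos asum (by omega)
  · norm_num

theorem sAvg_tendsto (apos : ∀ n, 0 < a n) (asum : Summable a)
    : Tendsto (sAvg a) atTop (𝓝 0) := by
  have h : Tendsto (fun k : ℕ => rTail a 0 * (1 / 2 : ℝ) ^ k) atTop (𝓝 0) := by
    simpa using (tendsto_pow_atTop_nhds_zero_of_lt_one (r := (1 / 2 : ℝ)) (by norm_num)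
      (by norm_num)).const_mul (rTail a 0)
  refine squeeze_zero (fun k => (sAvg_pos apos asum k).le) (fun k => ?_) h
  unfold sAvg
  rw [one_div, inv_pow, ← div_eq_mul_inv]
  gcongr
  exact rTail_anti apos asum (Nat.zero_le _)

/-- Right end of a step interval. -/
noncomputable def rightEnd (a : ℕ → ℝ) (k j : ℕ) : ℝ := leftEnd a k j + nodeLen a (2 ^ k + j)

theorem left_even (k j : ℕ) : leftEnd a (k + 1) (2 * j) = leftEnd a k j := by
  simp [leftEnd]

theorem left_odd (k j : ℕ) : leftEnd a (k + 1) (2 * j + 1) =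
    leftEnd a k j + nodeLen a (2 * (2 ^ k + j)) + a (2 ^ k + j - 1) := by
  have h1 : (2 * j + 1) % 2 = 1 := by omega
  have h2 : (2 * j + 1) / 2 = j := by omega
  have h3 : 2 ^ (k + 1) + (2 * j + 1) - 1 = 2 * (2 ^ k + j) := by rw [pow_succ]; omega
  simp [leftEnd, h1, h2, h3]

theorem right_odd (apos : ∀ n, 0 < a n) (amono : ∀ n, a (n + 1) ≤ a n) (asum : Summable a)
    (k j : ℕ) : rightEnd a (k + 1) (2 * j + 1) = rightEnd a k j := by
  unfold rightEnd
  have h1 : 1 ≤ 2 ^ k := Nat.one_le_two_pow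
  rw [left_odd, nodeLen_split apos amono asum (by omega : 1 ≤ 2 ^ k + j),
    show 2 ^ (k + 1) + (2 * j + 1) = 2 * (2 ^ k + j) + 1 by ring]
  ring

theorem right_even (apos : ∀ n, 0 < a n) (amono : ∀ n, a (n + 1) ≤ a n) (asum : Summable a)
    (k j : ℕ) : rightEnd a (k + 1) (2 * j) ≤ rightEnd a k j := by
  unfold rightEnd
  have h1 : 1 ≤ 2 ^ k := Nat.one_le_two_pow
  rw [left_even, nodeLen_split apos amono asum (by omega : 1 ≤ 2 ^ k + j),
    show 2 ^ (k + 1) + (2 * j) = 2 * (2 ^ k + j) by ring]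
  have := apos (2 ^ k + j - 1)
  have := nodeLen_nonneg apos (2 * (2 ^ k + j) + 1)
  linarith

theorem child_subset (apos : ∀ n, 0 < a n) (amono : ∀ n, a (n + 1) ≤ a n) (asum : Summable a)
    (k j : ℕ) : Icc (leftEnd a (k + 1) j) (rightEnd a (k + 1) j) ⊆
    Icc (leftEnd a k (j / 2)) (rightEnd a k (j / 2)) := by
  obtain ⟨i, rfl | rfl⟩ : ∃ i, j = 2 * i ∨ j = 2 * i + 1 := ⟨j / 2, by omega⟩
  · rw [show 2 * i / 2 = i by omega]
    exact Icc_subset_Icc (left_even k i).ge (right_even apos amono asum k i)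
  · rw [show (2 * i + 1) / 2 = i by omega]
    refine Icc_subset_Icc ?_ (right_odd apos amono asum k i).le
    rw [left_odd]
    have := apos (2 ^ k + i - 1)
    have := nodeLen_nonneg apos (2 * (2 ^ k + i))
    linarith

theorem right_le_left (apos : ∀ n, 0 < a n) (amono : ∀ n, a (n + 1) ≤ a n) (asum : Summable a)
    (k j : ℕ) (hj : j + 1 < 2 ^ k) : rightEnd a k j ≤ leftEnd a k (j + 1) := by
  induction k generalizing j with
  | zero => simp at hj
  | succ k ih =>
    rw [pow_succ] at hj
    obtain ⟨i, rfl | rfl⟩ : ∃ i, j = 2 * i ∨ j = 2 * i + 1 := ⟨j / 2, by omega⟩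
    · rw [left_odd]
      unfold rightEnd
      rw [left_even, show 2 ^ (k + 1) + (2 * i) = 2 * (2 ^ k + i) by ring]
      have := apos (2 ^ k + i - 1)
      linarith
    · rw [right_odd apos amono asum, show 2 * i + 1 + 1 = 2 * (i + 1) by ring, left_even]
      exact ih i (by omega)

theorem left_le_right (apos : ∀ n, 0 < a n)
    (k j : ℕ) : leftEnd a k j ≤ rightEnd a k j := by
  have := nodeLen_nonneg apos (2 ^ k + j)
  unfold rightEnd; linarith

theorem right_le_left' (apos : ∀ n, 0 < a n) (amono : ∀ n, a (n + 1) ≤ a n) (asum : Summable a)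
    (k i j : ℕ) (hij : i < j) (hj : j < 2 ^ k) :
    rightEnd a k i ≤ leftEnd a k j := by
  induction j, hij using Nat.le_induction with
  | base => exact right_le_left apos amono asum k i hj
  | succ j hij ih =>
    exact (ih (by omega)).trans ((left_le_right apos k j).trans
      (right_le_left apos amono asum k j hj))

theorem exists_pt (apos : ∀ n, 0 < a n) (amono : ∀ n, a (n + 1) ≤ a n) (asum : Summable a)
    (t : ℝ) : ∃ x : ℝ, ∀ k : ℕ,
    x ∈ Icc (leftEnd a k ⌊2 ^ k * t⌋₊) (rightEnd a k ⌊2 ^ k * t⌋₊) := by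
  have := IsCompact.nonempty_iInter_of_sequence_nonempty_isCompact_isClosed
    (fun k : ℕ => Icc (leftEnd a k ⌊2 ^ k * t⌋₊) (rightEnd a k ⌊2 ^ k * t⌋₊))
    (fun k => by
      have h := child_subset apos amono asum k ⌊2 ^ (k + 1) * t⌋₊
      have h2 : ⌊2 ^ (k + 1) * t⌋₊ / 2 = ⌊2 ^ k * t⌋₊ := by
        rw [← Nat.floor_div_ofNat]
        congr 1
        rw [pow_succ]; ring
      rwa [h2] at h)
    (fun k => nonempty_Icc.2 (left_le_right apos _ _)) isCompact_Icc (fun k => isClosed_Icc)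
  obtain ⟨x, hx⟩ := this
  exact ⟨x, fun k => mem_iInter.1 hx k⟩

theorem floor_lt {t : ℝ} (ht : t ∈ Ico (0 : ℝ) 1) (k : ℕ) : ⌊2 ^ k * t⌋₊ < 2 ^ k := by
  rw [Nat.floor_lt (by have := ht.1; positivity)]
  have : (0 : ℝ) < 2 ^ k := by positivity
  push_cast
  nlinarith [ht.2]

/-- The coding map from `[0,1)` to the Cantor set. -/
theorem exists_code (apos : ∀ n, 0 < a n) (amono : ∀ n, a (n + 1) ≤ a n) (asum : Summable a)
    : ∃ G : ℝ → ℝ, ∀ t k,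
    G t ∈ Icc (leftEnd a k ⌊2 ^ k * t⌋₊) (rightEnd a k ⌊2 ^ k * t⌋₊) := by
  choose G hG using exists_pt apos amono asum
  exact ⟨G, hG⟩

theorem mem_cantor (x : ℝ) : x ∈ cantorSetOf a ↔
    ∀ k, ∃ j, j < 2 ^ k ∧ x ∈ Icc (leftEnd a k j) (rightEnd a k j) := by
  simp only [cantorSetOf, rightEnd, mem_iInter, mem_iUnion, Finset.mem_range, exists_prop]

end
section
variable {A : ℝ} {h : ℝ → ℝ≥0∞}

theorem h_mono (hd : IsDimFun A h) {x y : ℝ} (hx : 0 < x) (hxy : x ≤ y) (hy : y ≤ A) :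
    h x ≤ h y :=
  hd.strictMonoOn.monotoneOn ⟨hx, hxy.trans hy⟩ ⟨hx.trans_le hxy, hy⟩ hxy

theorem exists_net (E : Set ℝ) (ρ : ℝ) : ∃ s ⊆ E,
    (∀ x ∈ s, ∀ y ∈ s, x ≠ y → 2 * ρ ≤ dist x y) ∧ ∀ y ∈ E, y ∈ s ∨ ∃ x ∈ s, dist y x < 2 * ρ := by
  obtain ⟨s, hs⟩ := zorn_subset
    {s : Set ℝ | s ⊆ E ∧ s.Pairwise fun x y => 2 * ρ ≤ dist x y} (by
      intro c hc hchain
      refine ⟨⋃₀ c, ⟨sUnion_subset fun t ht => (hc ht).1, ?_⟩, fun t ht => subset_sUnion_of_mem ht⟩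
      exact (pairwise_sUnion hchain.directedOn).2 fun t ht => (hc ht).2)
  refine ⟨s, hs.prop.1, fun x hx y hy hxy => hs.prop.2 hx hy hxy, fun y hy => ?_⟩
  by_contra! hcon
  have hins : insert y s ∈ {s : Set ℝ | s ⊆ E ∧ s.Pairwise fun x y => 2 * ρ ≤ dist x y} := by
    refine ⟨insert_subset hy hs.prop.1, hs.prop.2.insert fun x hx _ => ?_⟩
    exact ⟨hcon.2 x hx, by rw [dist_comm]; exact hcon.2 x hx⟩
  exact hcon.1 (hs.le_of_ge hins (subset_insert y s) (mem_insert y s))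

variable {a : ℕ → ℝ}

theorem code_close (apos : ∀ n, 0 < a n) (amono : ∀ n, a (n + 1) ≤ a n) (asum : Summable a)
    {G : ℝ → ℝ} (hG : ∀ t k,
    G t ∈ Icc (leftEnd a k ⌊2 ^ k * t⌋₊) (rightEnd a k ⌊2 ^ k * t⌋₊)) {k : ℕ} {t t' : ℝ}
    (ht : t ∈ Ico (0 : ℝ) 1) (ht' : t' ∈ Ico (0 : ℝ) 1) (htt : t ≤ t')
    (hd : G t' - G t < sAvg a (k + 1)) : t' - t ≤ 2 / 2 ^ k := by
  have hp : (0 : ℝ) < 2 ^ k := by positivity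
  have key : ⌊2 ^ k * t'⌋₊ ≤ ⌊2 ^ k * t⌋₊ + 1 := by
    by_contra! hcon
    have hlt := floor_lt ht' k
    set i := ⌊2 ^ k * t⌋₊
    set j := ⌊2 ^ k * t'⌋₊
    have h1 := right_le_left' apos amono asum k i (i + 1) (by omega) (by omega)
    have h2 := right_le_left' apos amono asum k (i + 1) j (by omega) (by omega)
    have h3 : sAvg a (k + 1) ≤ nodeLen a (2 ^ k + (i + 1)) :=
      sAvg_le_nodeLen apos amono asum (by omega) (by rw [pow_succ]; omega)
    have h4 := (hG t k).2
    have h5 := (hG t' k).1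
    have h6 : rightEnd a k (i + 1) = leftEnd a k (i + 1) + nodeLen a (2 ^ k + (i + 1)) := rfl
    linarith
  have h1 := Nat.lt_floor_add_one (2 ^ k * t')
  have h2 := Nat.floor_le (show 0 ≤ 2 ^ k * t by have := ht.1; positivity)
  have h3 : (⌊2 ^ k * t'⌋₊ : ℝ) ≤ ⌊2 ^ k * t⌋₊ + 1 := by exact_mod_cast key
  rw [le_div_iff₀ hp]
  linarith

theorem ball_vol (apos : ∀ n, 0 < a n) (amono : ∀ n, a (n + 1) ≤ a n) (asum : Summable a)
    {G : ℝ → ℝ} (hG : ∀ t k,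
    G t ∈ Icc (leftEnd a k ⌊2 ^ k * t⌋₊) (rightEnd a k ⌊2 ^ k * t⌋₊)) {k : ℕ} (x : ℝ) {ρ : ℝ}
    (hρ : 4 * ρ ≤ sAvg a (k + 1)) :
    volume (G ⁻¹' (ball x (2 * ρ)) ∩ Ico 0 1) ≤ ENNReal.ofReal (2 / 2 ^ k) := by
  refine (Real.volume_le_diam _).trans (ediam_le ?_)
  have key : ∀ t ∈ G ⁻¹' (ball x (2 * ρ)) ∩ Ico 0 1, ∀ t' ∈ G ⁻¹' (ball x (2 * ρ)) ∩ Ico 0 1,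
      t ≤ t' → t' - t ≤ 2 / 2 ^ k := by
    rintro t ⟨h1, ht⟩ t' ⟨h1', ht'⟩ htt
    refine code_close apos amono asum hG ht ht' htt ?_
    simp only [mem_preimage, mem_ball, Real.dist_eq, abs_lt] at h1 h1'
    linarith [h1.1, h1'.2]
  intro t ht t' ht'
  rw [edist_dist, Real.dist_eq]
  refine ENNReal.ofReal_le_ofReal ?_
  rcases le_total t t' with hh | hh
  · rw [abs_sub_comm, abs_of_nonneg (by linarith)]; exact key t ht t' ht' hh
  · rw [abs_of_nonneg (by linarith)]; exact key t' ht' t ht hh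

/-- The sequence in the theorem. -/
noncomputable def useq (h : ℝ → ℝ≥0∞) (a : ℕ → ℝ) (n : ℕ) : ℝ≥0∞ :=
  ((n : ℝ≥0∞) + 1) * h (rTail a n / ((n : ℝ) + 1))

theorem useq_pow (k : ℕ) : useq h a (2 ^ k - 1) = 2 ^ k * h (sAvg a k) := by
  unfold useq sAvg
  have h1 : 1 ≤ 2 ^ k := Nat.one_le_two_pow
  have h2 : ((2 ^ k - 1 : ℕ) : ℝ≥0∞) + 1 = 2 ^ k := by
    exact_mod_cast Nat.sub_add_cancel h1
  have h3 : ((2 ^ k - 1 : ℕ) : ℝ) + 1 = 2 ^ k := by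
    exact_mod_cast Nat.sub_add_cancel h1
  rw [h2, h3]

theorem useq_le (apos : ∀ n, 0 < a n) (asum : Summable a)
    (hd : IsDimFun A h) {n k : ℕ} (h1 : 2 ^ k ≤ n + 1) (h2 : n + 1 < 2 ^ (k + 1))
    (hA : sAvg a k ≤ A) : useq h a n ≤ 2 * 2 ^ k * h (sAvg a k) := by
  unfold useq
  gcongr
  · have : ((n + 1 : ℕ) : ℝ≥0∞) ≤ ((2 * 2 ^ k : ℕ) : ℝ≥0∞) := by
      rw [pow_succ] at h2
      exact_mod_cast (by omega : n + 1 ≤ 2 * 2 ^ k)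
    exact_mod_cast this
  · refine h_mono hd (div_pos (rTail_pos apos asum _) (by positivity)) ?_ hA
    unfold sAvg
    have h3 : (2 : ℝ) ^ k ≤ (n : ℝ) + 1 := by exact_mod_cast h1
    gcongr
    · exact rTail_nonneg apos _
    · exact rTail_anti apos asum (by omega)

theorem lower_P0 (apos : ∀ n, 0 < a n) (amono : ∀ n, a (n + 1) ≤ a n) (asum : Summable a)
    (hd : IsDimFun A h) {τ : ℝ≥0∞}
    (hτ : ∀ x : ℝ, 0 < x → 2 * x ≤ A → τ * h (2 * x) ≤ h x) {G : ℝ → ℝ} (hG : ∀ t k,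
    G t ∈ Icc (leftEnd a k ⌊2 ^ k * t⌋₊) (rightEnd a k ⌊2 ^ k * t⌋₊)) {D : ℝ≥0∞}
    (hD : D < limsup (useq h a) atTop) (E : Set ℝ) :
    τ / 8 * D * volume (G ⁻¹' E ∩ Ico 0 1) ≤ P0h A h E := by
  unfold P0h
  refine le_iInf fun δ => le_iInf fun hδ => le_iInf fun hδA => ?_
  obtain ⟨K, hK⟩ : ∃ K, ∀ k ≥ K, sAvg a k < δ := by
    have := (sAvg_tendsto apos asum).eventually (gt_mem_nhds hδ)
    exact eventually_atTop.1 this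
  obtain ⟨n, hn, hDn⟩ := frequently_atTop.1 (frequently_lt_of_lt_limsup (by isBoundedDefault) hD)
    (2 ^ (K + 1))
  obtain ⟨k, hk1, hk2, hk3⟩ : ∃ k, 2 ^ (k + 1) ≤ n + 1 ∧ n + 1 < 2 ^ (k + 1 + 1) ∧ K ≤ k := by
    have hlog : K + 1 ≤ Nat.log 2 (n + 1) :=
      Nat.le_log_of_pow_le (by norm_num) (by omega)
    refine ⟨Nat.log 2 (n + 1) - 1, ?_, ?_, by omega⟩
    · rw [Nat.sub_add_cancel (by omega)]
      exact Nat.pow_log_le_self 2 (by omega)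
    · rw [Nat.sub_add_cancel (by omega)]
      exact Nat.lt_pow_succ_log_self (by norm_num) _
  have hsδ := hK (k + 1) (by omega)
  have hs0 := sAvg_pos apos asum (k + 1)
  have hu := useq_le apos asum hd hk1 hk2 (hsδ.le.trans hδA)
  have hτ' := hτ (sAvg a (k + 1) / 2) (by linarith) (by linarith)
  rw [show 2 * (sAvg a (k + 1) / 2) = sAvg a (k + 1) by ring] at hτ'
  set ρ := sAvg a (k + 1) / 4 with hρ
  have h2ρ : 2 * ρ = sAvg a (k + 1) / 2 := by rw [hρ]; ring
  have hρ0 : 0 < ρ := by rw [hρ]; linarith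
  obtain ⟨s, hsE, hsep, hcov⟩ := exists_net E ρ
  have hdisj : s.PairwiseDisjoint fun x => ball x ρ := by
    intro x hx y hy hxy
    exact ball_disjoint_ball (by linarith [hsep x hx y hy hxy])
  have hscount : s.Countable := by
    refine hdisj.countable_of_isOpen (fun x _ => isOpen_ball) (fun x _ => ?_)
    exact nonempty_ball.2 hρ0
  have hpack : IsPacking E δ ((fun x => (x, ρ)) '' s) := by
    refine ⟨hscount.image _, ?_, ?_⟩
    · rintro _ ⟨x, hx, rfl⟩
      exact ⟨hsE hx, hρ0, by simp only; linarith⟩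
    · rintro _ ⟨x, hx, rfl⟩ _ ⟨y, hy, rfl⟩ hxy
      exact hdisj hx hy (fun e => hxy (by rw [e]))
  refine le_trans ?_ (le_iSup₂_of_le _ hpack le_rfl)
  have hinj : Function.Injective (fun x : ℝ => (x, ρ)) := fun x y e => (Prod.ext_iff.1 e).1
  rw [tsum_image (fun p : ℝ × ℝ => h (2 * p.2)) hinj.injOn]
  have hcount : Countable s := hscount.to_subtype
  have hvol : volume (G ⁻¹' E ∩ Ico 0 1) ≤ ∑' x : s, ENNReal.ofReal (2 / 2 ^ k) := by
    calc volume (G ⁻¹' E ∩ Ico 0 1)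
        ≤ volume (⋃ x : s, (G ⁻¹' (ball (x : ℝ) (2 * ρ)) ∩ Ico 0 1)) := by
          refine measure_mono ?_
          rintro t ⟨ht, ht1⟩
          rcases hcov (G t) ht with hh | ⟨x, hx, hxd⟩
          · exact mem_iUnion.2 ⟨⟨G t, hh⟩, mem_ball_self (by linarith), ht1⟩
          · exact mem_iUnion.2 ⟨⟨x, hx⟩, hxd, ht1⟩
      _ ≤ ∑' x : s, volume (G ⁻¹' (ball (x : ℝ) (2 * ρ)) ∩ Ico 0 1) := measure_iUnion_le _
      _ ≤ _ := ENNReal.tsum_le_tsum fun x =>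
          ball_vol apos amono asum hG x (by rw [hρ]; linarith)
  refine (mul_le_mul_right hvol _).trans ?_
  rw [← ENNReal.tsum_mul_left]
  refine ENNReal.tsum_le_tsum fun x => ?_
  simp only
  rw [h2ρ]
  refine le_trans ?_ hτ'
  have e1 : ENNReal.ofReal (2 / 2 ^ k) = 2 * ((2 : ℝ≥0∞) ^ k)⁻¹ := by
    rw [div_eq_mul_inv, ENNReal.ofReal_mul (by norm_num),
      ENNReal.ofReal_inv_of_pos (by positivity), ENNReal.ofReal_pow (by norm_num)]
    simp
  rw [e1]
  have hpk : (2 : ℝ≥0∞) ^ k * (2 ^ k)⁻¹ = 1 :=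
    ENNReal.mul_inv_cancel (by positivity) (by finiteness)
  have h8 : (8 : ℝ≥0∞)⁻¹ * 8 = 1 := ENNReal.inv_mul_cancel (by norm_num) (by norm_num)
  calc τ / 8 * D * (2 * (2 ^ k)⁻¹)
      ≤ τ / 8 * (2 * 2 ^ (k + 1) * h (sAvg a (k + 1))) * (2 * (2 ^ k)⁻¹) := by
        gcongr; exact hDn.le.trans hu
    _ = τ * h (sAvg a (k + 1)) * ((8 : ℝ≥0∞)⁻¹ * 8) * ((2 : ℝ≥0∞) ^ k * (2 ^ k)⁻¹) := by
        rw [div_eq_mul_inv, pow_succ]; ring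
    _ = _ := by rw [hpk, h8]; simp

theorem lower_Ph (apos : ∀ n, 0 < a n) (amono : ∀ n, a (n + 1) ≤ a n) (asum : Summable a)
    (hd : IsDimFun A h) {τ : ℝ≥0∞}
    (hτ : ∀ x : ℝ, 0 < x → 2 * x ≤ A → τ * h (2 * x) ≤ h x) {D : ℝ≥0∞}
    (hD : D < limsup (useq h a) atTop) :
    τ / 8 * D ≤ Ph A h (cantorSetOf a) := by
  obtain ⟨G, hG⟩ := exists_code apos amono asum
  unfold Ph
  refine le_iInf fun t => le_iInf fun ht => ?_
  have h1 : (1 : ℝ≥0∞) ≤ ∑' n, volume (G ⁻¹' (t n) ∩ Ico 0 1) := by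
    calc (1 : ℝ≥0∞) = volume (Ico (0 : ℝ) 1) := by simp
      _ ≤ volume (⋃ n, (G ⁻¹' (t n) ∩ Ico 0 1)) := by
        refine measure_mono fun x hx => ?_
        have : G x ∈ cantorSetOf a := (mem_cantor _).2 fun k => ⟨_, floor_lt hx k, hG x k⟩
        rw [ht] at this
        obtain ⟨n, hn⟩ := mem_iUnion.1 this
        exact mem_iUnion.2 ⟨n, hn, hx⟩
      _ ≤ _ := measure_iUnion_le _
  calc τ / 8 * D = τ / 8 * D * 1 := by simp
    _ ≤ τ / 8 * D * ∑' n, volume (G ⁻¹' (t n) ∩ Ico 0 1) := by gcongr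
    _ = ∑' n, τ / 8 * D * volume (G ⁻¹' (t n) ∩ Ico 0 1) := ENNReal.tsum_mul_left.symm
    _ ≤ _ := ENNReal.tsum_le_tsum fun n => lower_P0 apos amono asum hd hτ hG hD (t n)

theorem Ph_le_P0 (hd : IsDimFun A h) (E : Set ℝ) : Ph A h E ≤ P0h A h E := by
  have h0 : P0h A h ∅ = 0 := by
    rw [← nonpos_iff_eq_zero]
    unfold P0h
    refine iInf_le_of_le A (iInf_le_of_le hd.posA (iInf_le_of_le le_rfl ?_))
    refine iSup_le fun P => iSup_le fun hP => ?_
    have : P = ∅ := eq_empty_of_forall_notMem fun p hp => (hP.2.1 p hp).1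
    subst this
    simp
  unfold Ph
  refine iInf_le_of_le (fun n => if n = 0 then E else ∅) (iInf_le_of_le ?_ ?_)
  · ext x; simp
  · rw [tsum_eq_single 0 (fun n hn => by simp [hn, h0])]
    simp

theorem exists_node (apos : ∀ n, 0 < a n) (amono : ∀ n, a (n + 1) ≤ a n) (asum : Summable a)
    (x ρ : ℝ) (hx : x ∈ cantorSetOf a) (hρ : 0 < ρ) {K : ℕ}
    (hK : 2 * ρ < sAvg a (K + 2)) : ∃ k j, K ≤ k ∧ j < 2 ^ (k + 2) ∧
      Icc (leftEnd a (k + 2) j) (rightEnd a (k + 2) j) ⊆ ball x ρ ∧ ρ ≤ sAvg a k := by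
  classical
  rw [mem_cantor] at hx
  have hex : ∃ k, ∃ j, j < 2 ^ k ∧ x ∈ Icc (leftEnd a k j) (rightEnd a k j) ∧
      Icc (leftEnd a k j) (rightEnd a k j) ⊆ ball x ρ := by
    obtain ⟨k, hk⟩ := ((sAvg_tendsto apos asum).eventually (gt_mem_nhds hρ)).exists
    obtain ⟨j, hj, hxj⟩ := hx (k + 1)
    refine ⟨k + 1, j, hj, hxj, fun y hy => ?_⟩
    have h1 : nodeLen a (2 ^ (k + 1) + j) ≤ sAvg a k :=
      nodeLen_le_sAvg apos amono asum (by omega)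
    have h2 : rightEnd a (k + 1) j = leftEnd a (k + 1) j + nodeLen a (2 ^ (k + 1) + j) := rfl
    rw [mem_ball, Real.dist_eq, abs_lt]
    constructor <;> linarith [hxj.1, hxj.2, hy.1, hy.2]
  obtain ⟨j, hj, hxj, hsub⟩ := Nat.find_spec hex
  have hmin := fun m hm => Nat.find_min hex (m := m) hm
  set k := Nat.find hex
  have hkK : K + 2 ≤ k := by
    by_contra! hcon
    have h1 : sAvg a (K + 2) ≤ nodeLen a (2 ^ k + j) := by
      have h2 : 2 ^ (k + 1) ≤ 2 ^ (K + 2) := Nat.pow_le_pow_right (by norm_num) (by omega)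
      have h3 : 1 ≤ 2 ^ k := Nat.one_le_two_pow
      rw [pow_succ] at h2
      exact sAvg_le_nodeLen apos amono asum (by omega) (by omega)
    have h2 : rightEnd a k j = leftEnd a k j + nodeLen a (2 ^ k + j) := rfl
    have hl := hsub (left_mem_Icc.2 (left_le_right apos k j))
    have hr := hsub (right_mem_Icc.2 (left_le_right apos k j))
    rw [mem_ball, Real.dist_eq, abs_lt] at hl hr
    linarith [hl.1, hr.2]
  obtain ⟨l, hl⟩ : ∃ l, k = l + 2 := ⟨k - 2, by omega⟩
  obtain ⟨i, hi, hxi⟩ := hx (l + 1)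
  have hns : ¬ Icc (leftEnd a (l + 1) i) (rightEnd a (l + 1) i) ⊆ ball x ρ := fun hh =>
    hmin (l + 1) (by omega) ⟨i, hi, hxi, hh⟩
  refine ⟨l, j, by omega, hl ▸ hj, hl ▸ hsub, ?_⟩
  by_contra! hcon
  refine hns fun y hy => ?_
  have h1 : nodeLen a (2 ^ (l + 1) + i) ≤ sAvg a l :=
    nodeLen_le_sAvg apos amono asum (by omega)
  have h2 : rightEnd a (l + 1) i = leftEnd a (l + 1) i + nodeLen a (2 ^ (l + 1) + i) := rfl
  rw [mem_ball, Real.dist_eq, abs_lt]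
  constructor <;> linarith [hxi.1, hxi.2, hy.1, hy.2]

theorem floor_of_mem {t : ℝ} {k j : ℕ} (ht : t ∈ Ico ((j : ℝ) / 2 ^ k) ((j + 1) / 2 ^ k)) :
    ⌊2 ^ k * t⌋₊ = j := by
  have hp : (0 : ℝ) < 2 ^ k := by positivity
  have h1 := (div_le_iff₀ hp).1 ht.1
  have h2 := (lt_div_iff₀ hp).1 ht.2
  rw [Nat.floor_eq_iff (by have := Nat.cast_nonneg (α := ℝ) j; linarith)]
  constructor <;> linarith

theorem upper_P0 (apos : ∀ n, 0 < a n) (amono : ∀ n, a (n + 1) ≤ a n) (asum : Summable a)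
    (hd : IsDimFun A h) {τ : ℝ≥0∞} (hτ0 : 0 < τ) (hτt : τ ≠ ∞)
    (hτ : ∀ x : ℝ, 0 < x → 2 * x ≤ A → τ * h (2 * x) ≤ h x) {B : ℝ≥0∞}
    (hB : limsup (useq h a) atTop < B) :
    P0h A h (cantorSetOf a) ≤ 4 * τ⁻¹ * B := by
  obtain ⟨G, hG⟩ := exists_code apos amono asum
  obtain ⟨N, hN⟩ := eventually_atTop.1 (eventually_lt_of_limsup_lt hB)
  have hA2 : 0 < A / 2 := by have := hd.posA; linarith
  obtain ⟨K0, hK0⟩ := eventually_atTop.1 ((sAvg_tendsto apos asum).eventually (gt_mem_nhds hA2))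
  set K := max N K0
  have hv : ∀ k ≥ K, 2 ^ k * h (sAvg a k) ≤ B := by
    intro k hk
    rw [← useq_pow]
    refine (hN _ ?_).le
    have := Nat.lt_two_pow_self (n := k)
    have : N ≤ k := (le_max_left _ _).trans hk
    omega
  have hs : ∀ k ≥ K, 2 * sAvg a k ≤ A := fun k hk => by
    have := hK0 k ((le_max_right _ _).trans hk)
    linarith
  unfold P0h
  refine iInf_le_of_le (min A (sAvg a (K + 2))) (iInf_le_of_le
    (lt_min hd.posA (sAvg_pos apos asum _)) (iInf_le_of_le (min_le_left _ _) ?_))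
  refine iSup_le fun P => iSup_le fun hP => ?_
  obtain ⟨hPc, hP1, hP2⟩ := hP
  have hex : ∀ p : P, ∃ k j, K ≤ k ∧ j < 2 ^ (k + 2) ∧
      Icc (leftEnd a (k + 2) j) (rightEnd a (k + 2) j) ⊆ ball (p : ℝ × ℝ).1 (p : ℝ × ℝ).2 ∧
        (p : ℝ × ℝ).2 ≤ sAvg a k := fun p =>
    exists_node apos amono asum _ _ (hP1 p p.2).1 (hP1 p p.2).2.1
      ((hP1 p p.2).2.2.trans_le (min_le_right _ _))
  choose k j hk hj hsub hle using hex
  have : Countable P := hPc.to_subtype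
  let S : P → Set ℝ := fun p =>
    Ico ((j p : ℝ) / 2 ^ (k p + 2)) ((j p + 1) / 2 ^ (k p + 2))
  have hSd : Pairwise (Function.onFun Disjoint S) := by
    intro p q hpq
    refine Set.disjoint_left.2 fun t hp hq => ?_
    have e1 := hG t (k p + 2)
    have e2 := hG t (k q + 2)
    rw [floor_of_mem hp] at e1
    rw [floor_of_mem hq] at e2
    exact Set.disjoint_left.1 (hP2 p.2 q.2 (fun e => hpq (Subtype.ext e)))
      (hsub p e1) (hsub q e2)
  have hSvol : ∀ p, volume (S p) = ((2 : ℝ≥0∞) ^ (k p + 2))⁻¹ := by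
    intro p
    rw [Real.volume_Ico, ← sub_div, add_sub_cancel_left, one_div,
      ENNReal.ofReal_inv_of_pos (by positivity), ENNReal.ofReal_pow (by norm_num)]
    simp
  have hSsum : ∑' p, volume (S p) ≤ 1 := by
    rw [← measure_iUnion hSd (fun p => measurableSet_Ico)]
    calc _ ≤ volume (Ico (0 : ℝ) 1) := by
          refine measure_mono (iUnion_subset fun p => Ico_subset_Ico (by positivity) ?_)
          rw [div_le_one (by positivity)]
          exact_mod_cast hj p
      _ = 1 := by simp
  calc ∑' p : P, h (2 * (p : ℝ × ℝ).2) ≤ ∑' p : P, 4 * τ⁻¹ * B * volume (S p) := by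
        refine ENNReal.tsum_le_tsum fun p => ?_
        have hp0 := (hP1 p p.2).2.1
        have h1 : h (2 * (p : ℝ × ℝ).2) ≤ h (2 * sAvg a (k p)) :=
          h_mono hd (by linarith) (by linarith [hle p]) (hs _ (hk p))
        have h2 := hτ _ (sAvg_pos apos asum (k p)) (hs _ (hk p))
        have h3 := hv _ (hk p)
        have hpk : (2 : ℝ≥0∞) ^ (k p) * (2 ^ (k p))⁻¹ = 1 :=
          ENNReal.mul_inv_cancel (by positivity) (by finiteness)
        have h4 : (4 : ℝ≥0∞) * 4⁻¹ = 1 := ENNReal.mul_inv_cancel (by norm_num) (by norm_num)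
        have hττ : τ⁻¹ * τ = 1 := ENNReal.inv_mul_cancel hτ0.ne' hτt
        rw [hSvol]
        refine h1.trans ?_
        calc h (2 * sAvg a (k p)) = τ⁻¹ * (τ * h (2 * sAvg a (k p))) := by
              rw [← mul_assoc, hττ, one_mul]
          _ ≤ τ⁻¹ * h (sAvg a (k p)) := by gcongr
          _ = τ⁻¹ * (2 ^ (k p) * h (sAvg a (k p))) * (2 ^ (k p))⁻¹ * (4 * 4⁻¹) := by
              rw [h4]
              calc _ = τ⁻¹ * h (sAvg a (k p)) * ((2 : ℝ≥0∞) ^ (k p) * (2 ^ (k p))⁻¹) := by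
                    rw [hpk, mul_one]
                _ = _ := by ring
          _ ≤ τ⁻¹ * B * (2 ^ (k p))⁻¹ * (4 * 4⁻¹) := by gcongr
          _ = _ := by
              rw [pow_add, ENNReal.mul_inv (by left; positivity) (by left; finiteness)]
              norm_num
              ring
    _ = 4 * τ⁻¹ * B * ∑' p, volume (S p) := ENNReal.tsum_mul_left
    _ ≤ 4 * τ⁻¹ * B * 1 := by gcongr
    _ = _ := mul_one _

theorem two_sided (apos : ∀ n, 0 < a n) (amono : ∀ n, a (n + 1) ≤ a n) (asum : Summable a)
    (hd : IsDimFun A h) : ∃ c K : ℝ≥0∞, c ≠ 0 ∧ K ≠ ∞ ∧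
    c * limsup (useq h a) atTop ≤ Ph A h (cantorSetOf a) ∧
    Ph A h (cantorSetOf a) ≤ K * limsup (useq h a) atTop := by
  obtain ⟨τ, hτ0, hτt, hτ⟩ := hd.doubling
  have hc0 : τ / 8 ≠ 0 := (ENNReal.div_pos hτ0.ne' (by norm_num)).ne'
  have hct : τ / 8 ≠ ∞ := ENNReal.div_ne_top hτt (by norm_num)
  have hK0 : 4 * τ⁻¹ ≠ 0 := mul_ne_zero (by norm_num) (ENNReal.inv_ne_zero.2 hτt)
  have hKt : 4 * τ⁻¹ ≠ ∞ := ENNReal.mul_ne_top (by norm_num) (ENNReal.inv_ne_top.2 hτ0.ne')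
  refine ⟨τ / 8, 4 * τ⁻¹, hc0, hKt, ?_, ?_⟩
  · rw [mul_comm, ← ENNReal.le_div_iff_mul_le (Or.inl hc0) (Or.inl hct)]
    refine le_of_forall_lt_imp_le_of_dense fun D hD => ?_
    rw [ENNReal.le_div_iff_mul_le (Or.inl hc0) (Or.inl hct), mul_comm]
    exact lower_Ph apos amono asum hd hτ hD
  · rw [mul_comm, ← ENNReal.div_le_iff_le_mul (Or.inl hK0) (Or.inl hKt)]
    refine le_of_forall_gt_imp_ge_of_dense fun B hB => ?_
    rw [ENNReal.div_le_iff_le_mul (Or.inl hK0) (Or.inl hKt), mul_comm]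
    exact (Ph_le_P0 hd _).trans (upper_P0 apos amono asum hd hτ0 hτt hτ hB)

end

end CantorAux

/-- Theorem, packing part: for the Cantor set `C_a` and any
dimension function `h`, `P^h(C_a)` is zero / infinite / positive-finite
according as `limsup_n n·h(rₙ/n)` is zero / infinite / positive-finite.
(0-based indices: the paper's `n·h(rₙ/n)` is `(n+1)·h(rTail a n/(n+1))`.) -/
theorem packing_trichotomy_cantor (A : ℝ) (a : ℕ → ℝ)
    (apos : ∀ n, 0 < a n) (amono : ∀ n, a (n + 1) ≤ a n) (asum : Summable a)
    (h : ℝ → ℝ≥0∞) (hd : IsDimFun A h) :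
    (Ph A h (cantorSetOf a) = 0 ↔
      Filter.limsup
        (fun n : ℕ => ((n : ℝ≥0∞) + 1) * h (rTail a n / ((n : ℝ) + 1)))
        Filter.atTop = 0) ∧
    (Ph A h (cantorSetOf a) = ∞ ↔
      Filter.limsup
        (fun n : ℕ => ((n : ℝ≥0∞) + 1) * h (rTail a n / ((n : ℝ) + 1)))
        Filter.atTop = ∞) ∧
    (0 < Ph A h (cantorSetOf a) ∧ Ph A h (cantorSetOf a) < ∞ ↔
      0 < Filter.limsup
        (fun n : ℕ => ((n : ℝ≥0∞) + 1) * h (rTail a n / ((n : ℝ) + 1)))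
        Filter.atTop ∧
      Filter.limsup
        (fun n : ℕ => ((n : ℝ≥0∞) + 1) * h (rTail a n / ((n : ℝ) + 1)))
        Filter.atTop < ∞) := by
  obtain ⟨c, K, hc, hK, h1, h2⟩ := CantorAux.two_sided apos amono asum hd
  change (_ ↔ limsup (CantorAux.useq h a) atTop = 0) ∧
    (_ ↔ limsup (CantorAux.useq h a) atTop = ∞) ∧
    (_ ↔ 0 < limsup (CantorAux.useq h a) atTop ∧ limsup (CantorAux.useq h a) atTop < ∞)
  set M := limsup (CantorAux.useq h a) atTop
  have hz : Ph A h (cantorSetOf a) = 0 ↔ M = 0 := by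
    constructor
    · intro e
      rw [e, nonpos_iff_eq_zero, mul_eq_zero] at h1
      exact h1.resolve_left hc
    · intro e
      rwa [e, mul_zero, nonpos_iff_eq_zero] at h2
  have ht : Ph A h (cantorSetOf a) = ∞ ↔ M = ∞ := by
    constructor
    · intro e
      rw [e, top_le_iff] at h2
      by_contra hM
      exact ENNReal.mul_ne_top hK hM h2
    · intro e
      rwa [e, ENNReal.mul_top hc, top_le_iff] at h1
  refine ⟨hz, ht, ?_⟩
  rw [pos_iff_ne_zero, pos_iff_ne_zero, lt_top_iff_ne_top, lt_top_iff_ne_top, Ne, Ne, hz, ht]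
end
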